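/- Let φ be subharmonic on ℂ with doubling Laplacian, ω a flat weight for φ, ε > 0 and m ∈ ℕ. There exists C > 0 such that for every η ∈ ℂ there is an entire function P_η with P_η(η) = 1 and |P_η(z)| ≤ C e^{ε(φ(z) − φ(η))} (ω(η)/ω(z)) / (1 + d_φ(z,η)^m) for all z ∈ ℂ. -/

import Mathlib

open MeasureTheory Metric Filter Set
open scoped ENNReal NNReal Real Topology Classical

noncomputable section

/-- The Laplacian of a function on `ℂ ≅ ℝ²`, computed via the second Fréchet derivative. -/
def lap (v : ℂ → ℝ) (z : ℂ) : ℝ :=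
  iteratedFDeriv ℝ 2 v z ![1, 1] + iteratedFDeriv ℝ 2 v z ![Complex.I, Complex.I]

/-- `μ` is a doubling measure on `ℂ` with doubling constant `C`. -/
def IsDoubling (μ : Measure ℂ) (C : ℝ≥0) : Prop :=
  ∀ z : ℂ, ∀ r : ℝ, 0 < r → μ (ball z (2 * r)) ≤ C * μ (ball z r)

/-- `φ` is a (continuous) subharmonic function whose distributional Laplacian is the
doubling measure `μ` (not identically zero).  The distributional identity is expressed
by testing against smooth compactly supported functions. -/
structure HasDoublingLaplacian (φ : ℂ → ℝ) (μ : Measure ℂ) : Prop where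
  continuous : Continuous φ
  lap_eq : ∀ v : ℂ → ℝ, ContDiff ℝ (⊤ : ℕ∞) v → HasCompactSupport v →
    ∫ z, φ z * lap v z = ∫ z, v z ∂μ
  doubling : ∃ C : ℝ≥0, 0 < C ∧ IsDoubling μ C
  ne_zero : μ ≠ 0

/-- `ρ` assigns to every `z` the positive radius such that the disk `D(z, ρ z)` has
`μ`-mass `1`. -/
def IsRadius (μ : Measure ℂ) (ρ : ℂ → ℝ) : Prop :=
  ∀ z : ℂ, 0 < ρ z ∧ μ (ball z (ρ z)) = 1

/-- The distance induced by the metric `ρ(z)⁻² dz⊗d\bar z`: infimum of lengths of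
`C¹` curves joining the two points. -/
def pathDist (ρ : ℂ → ℝ) (z ζ : ℂ) : ℝ :=
  sInf { L : ℝ | ∃ γ : ℝ → ℂ, γ 0 = z ∧ γ 1 = ζ ∧ ContDiff ℝ 1 γ ∧
    L = ∫ t in (0:ℝ)..1, ‖deriv γ t‖ / ρ (γ t) }

/-- The `pathDist` from a point to a set. -/
def pathDistSet (ρ : ℂ → ℝ) (z : ℂ) (Λ : Set ℂ) : ℝ :=
  ⨅ l : Λ, pathDist ρ z l.1

/-- A flat weight for `φ`: a positive measurable function whose logarithm has slow
growth with respect to the induced distance. -/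
def IsFlatWeight (ρ : ℂ → ℝ) (ω : ℂ → ℝ) : Prop :=
  (∀ z, 0 < ω z) ∧ Measurable ω ∧
  ∃ C : ℝ, 0 < C ∧ ∀ z ζ : ℂ,
    |Real.log (ω z) - Real.log (ω ζ)| ≤ C * (1 + max (Real.log (pathDist ρ z ζ)) 0)

/-- The norm of the space `F^p_{φ,ω}` (with `p = ∞` giving the weighted sup norm). -/
def Fnorm (p : ℝ≥0∞) (φ ω ρ : ℂ → ℝ) (f : ℂ → ℂ) : ℝ≥0∞ :=
  if p = ∞ then ⨆ z : ℂ, ENNReal.ofReal (ω z * ‖f z‖ * Real.exp (-φ z))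
  else (∫⁻ z, ENNReal.ofReal
      (‖f z‖ ^ p.toReal * Real.exp (-(p.toReal * φ z)) * ω z ^ p.toReal / ρ z ^ 2)) ^
      (1 / p.toReal)

/-- Membership in `F^p_{φ,ω}`: entire with finite norm. -/
def MemF (p : ℝ≥0∞) (φ ω ρ : ℂ → ℝ) (f : ℂ → ℂ) : Prop :=
  Differentiable ℂ f ∧ Fnorm p φ ω ρ f < ∞

/-- The norm of the sequence space `ℓ^p_{φ,ω}(Λ)`. -/
def lnorm (p : ℝ≥0∞) (φ ω : ℂ → ℝ) (Λ : Set ℂ) (v : ℂ → ℂ) : ℝ≥0∞ :=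
  if p = ∞ then ⨆ l : Λ, ENNReal.ofReal (ω l.1 * ‖v l.1‖ * Real.exp (-φ l.1))
  else (∑' l : Λ, ENNReal.ofReal
      (ω l.1 ^ p.toReal * ‖v l.1‖ ^ p.toReal * Real.exp (-(p.toReal * φ l.1)))) ^
      (1 / p.toReal)

/-- `Λ` is a sampling sequence for `F^p_{φ,ω}`. -/
def IsSampling (p : ℝ≥0∞) (φ ω ρ : ℂ → ℝ) (Λ : Set ℂ) : Prop :=
  if p = ∞ then
    ∃ C : ℝ≥0, 0 < C ∧ ∀ f : ℂ → ℂ, MemF ∞ φ ω ρ f →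
      Fnorm ∞ φ ω ρ f ≤ C * lnorm ∞ φ ω Λ f
  else
    ∃ C : ℝ≥0, 0 < C ∧ ∀ f : ℂ → ℂ, MemF p φ ω ρ f →
      (C : ℝ≥0∞)⁻¹ * lnorm p φ ω Λ f ≤ Fnorm p φ ω ρ f ∧
      Fnorm p φ ω ρ f ≤ C * lnorm p φ ω Λ f

/-- `Λ` is an interpolating sequence for `F^p_{φ,ω}`. -/
def IsInterpolating (p : ℝ≥0∞) (φ ω ρ : ℂ → ℝ) (Λ : Set ℂ) : Prop :=
  ∀ v : ℂ → ℂ, lnorm p φ ω Λ v < ∞ →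
    ∃ f : ℂ → ℂ, MemF p φ ω ρ f ∧ ∀ l ∈ Λ, f l = v l

/-- `Λ` is `ρ`-separated. -/
def RhoSeparated (ρ : ℂ → ℝ) (Λ : Set ℂ) : Prop :=
  ∃ δ : ℝ, 0 < δ ∧ ∀ l ∈ Λ, ∀ l' ∈ Λ, l ≠ l' → δ * max (ρ l) (ρ l') ≤ dist l l'

/-- `Λ` is a finite union of `ρ`-separated sequences. -/
def FiniteUnionSeparated (ρ : ℂ → ℝ) (Λ : Set ℂ) : Prop :=
  ∃ n : ℕ, ∃ Λs : Fin n → Set ℂ, Λ = ⋃ i, Λs i ∧ ∀ i, RhoSeparated ρ (Λs i)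

/-- Upper uniform density of `Λ` with respect to the doubling measure `μ`. -/
def upperUnifDensity (μ : Measure ℂ) (ρ : ℂ → ℝ) (Λ : Set ℂ) : ℝ≥0∞ :=
  limsup (fun r : ℝ =>
    ⨆ z : ℂ, Measure.count (Λ ∩ closedBall z (r * ρ z)) / μ (ball z (r * ρ z))) atTop

/-- Lower uniform density of `Λ` with respect to the doubling measure `μ`. -/
def lowerUnifDensity (μ : Measure ℂ) (ρ : ℂ → ℝ) (Λ : Set ℂ) : ℝ≥0∞ :=
  liminf (fun r : ℝ =>
    ⨅ z : ℂ, Measure.count (Λ ∩ closedBall z (r * ρ z)) / μ (ball z (r * ρ z))) atTop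

/-- The Cauchy–Riemann operator `∂̄` on `ℂ`-valued functions. -/
def dbar (v : ℂ → ℂ) (z : ℂ) : ℂ :=
  (fderiv ℝ v z 1 + Complex.I • fderiv ℝ v z Complex.I) / 2

/-- `∂̄ u = f` in the sense of distributions. -/
def IsDistribDbarOf (u f : ℂ → ℂ) : Prop :=
  ∀ v : ℂ → ℂ, ContDiff ℝ (⊤ : ℕ∞) v → HasCompactSupport v →
    ∫ z, f z * v z = - ∫ z, u z * dbar v z

/-- Closed axis-parallel rectangle with centre `a` and half-sides `s, t`. -/
def axisRect (a : ℂ) (s t : ℝ) : Set ℂ :=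
  {w : ℂ | |w.re - a.re| ≤ s ∧ |w.im - a.im| ≤ t}

/-!
Translating `η` to `0` and rescaling by `ρ η`, one may assume `μ (ball 0 1) = 1`; all constants then
depend on `μ` only through the doubling constant.

On a disk `ball 0 R` the Riesz decomposition writes `φ`, up to a bounded error, as
`(2π)⁻¹ logPotential (μ.restrict (ball 0 R)) + Re f` with `f` holomorphic, and `exp (ε f)` takes
care of the harmonic part. Write the charge `ε / (2π) • μ.restrict (ball 0 R)` as `τ + σ + σ`, where
`σ` lives on a fixed disk, chosen so large that `σ` has large mass.

The weight `exp (logPotential (τ + σ))` is matched by a polynomial whose zeros are Fekete points of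
`logPotential (τ + σ)`: dropping one Fekete point gives a polynomial dominated by its weighted value
there. Doubling controls `∫ ‖z - w‖⁻ᵟ ∂μ w` polynomially, which bounds the oscillation of the
potential near the Fekete points, so that this value may be moved to any nearby point. If `0` is far
from all Fekete points, all of them are kept. As they are more numerous than the mass of `τ`, the
superharmonic function `∑ log ‖z - x i‖ - logPotential τ` tends to `∞`, and the minimum principle
compares its value at `0` with its value close to some Fekete point; the growth of
`exp (logPotential σ)` pays for what is lost there. The second copy of `σ` gives the decay
`(1 + ‖z‖)⁻ᴹ`. Letting `R → ∞`, a normal family argument yields an entire function.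

Finally `ρ` decays at most polynomially in `‖z - η‖ / ρ η`, hence `pathDist ρ z η`, and with it the
flat weight, grows at most polynomially and is absorbed by the decay.
-/

section RieszKernel

variable {E : Type*} [NormedAddCommGroup E]

lemma norm_sub_rpow_neg_le_tsum_indicator {δ : ℝ} (hδ : 0 < δ) {z w : E} (hw : ‖z - w‖ ≤ 1) :
    ENNReal.ofReal (‖z - w‖ ^ (-δ)) ≤ ∑' n : ℕ, (closedBall z ((1 / 2) ^ n)).indicator
      (fun _ => ENNReal.ofReal (((2 : ℝ) ^ δ) ^ (n + 1))) w := by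
  rcases eq_or_ne w z with rfl | hne
  · simp [Real.zero_rpow (neg_ne_zero.mpr hδ.ne')]
  obtain ⟨n, hlower, hupper⟩ := exists_nat_pow_near_of_lt_one (y := (1 / 2 : ℝ))
    (norm_sub_pos_iff.mpr hne.symm) hw (by norm_num) (by norm_num)
  refine le_trans ?_ (ENNReal.le_tsum n)
  rw [indicator_of_mem (by rwa [mem_closedBall_iff_norm'])]
  apply ENNReal.ofReal_le_ofReal
  calc ‖z - w‖ ^ (-δ) ≤ ((1 / 2) ^ (n + 1)) ^ (-δ) :=
        Real.rpow_le_rpow_of_nonpos (by positivity) hlower.le (by linarith)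
    _ = ((2 : ℝ) ^ δ) ^ (n + 1) := by
        rw [← Real.rpow_natCast_mul (by norm_num), mul_comm, Real.rpow_mul_natCast (by norm_num),
          one_div, Real.inv_rpow (by norm_num), Real.rpow_neg (by norm_num), inv_inv]

lemma lintegral_norm_sub_rpow_neg_le [MeasurableSpace E] [OpensMeasurableSpace E] {ν : Measure E}
    {z : E} {δ : ℝ} (hδ : 0 < δ) {q : ℝ≥0} (hq : (2 : ℝ) ^ δ * q < 1) {M : ℝ≥0∞}
    (hν : ∀ n : ℕ, ν (closedBall z ((1 / 2) ^ n)) ≤ q ^ n * M) :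
    ∫⁻ w in ball z 1, ENNReal.ofReal (‖z - w‖ ^ (-δ)) ∂ν
      ≤ ENNReal.ofReal (2 ^ δ * (1 - 2 ^ δ * (q : ℝ))⁻¹) * M := by
  have shell_le (n : ℕ) : ENNReal.ofReal (((2 : ℝ) ^ δ) ^ (n + 1)) * ν (closedBall z ((1 / 2) ^ n))
      ≤ ENNReal.ofReal (2 ^ δ * (2 ^ δ * q) ^ n) * M := by
    calc _ ≤ ENNReal.ofReal (((2 : ℝ) ^ δ) ^ (n + 1)) * (q ^ n * M) := by gcongr; exact hν n
      _ = _ := by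
        rw [← mul_assoc, ← ENNReal.ofReal_coe_nnreal, ← ENNReal.ofReal_pow (by positivity),
          ← ENNReal.ofReal_mul (by positivity)]
        ring_nf
  calc ∫⁻ w in ball z 1, ENNReal.ofReal (‖z - w‖ ^ (-δ)) ∂ν
      ≤ ∫⁻ w in ball z 1, ∑' n : ℕ, (closedBall z ((1 / 2) ^ n)).indicator
          (fun _ => ENNReal.ofReal (((2 : ℝ) ^ δ) ^ (n + 1))) w ∂ν :=
        setLIntegral_mono' measurableSet_ball fun w hw =>
          norm_sub_rpow_neg_le_tsum_indicator hδ (mem_ball_iff_norm'.mp hw).le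
    _ ≤ ∫⁻ w, ∑' n : ℕ, (closedBall z ((1 / 2) ^ n)).indicator
          (fun _ => ENNReal.ofReal (((2 : ℝ) ^ δ) ^ (n + 1))) w ∂ν := setLIntegral_le_lintegral _ _
    _ = ∑' n : ℕ, ENNReal.ofReal (((2 : ℝ) ^ δ) ^ (n + 1)) * ν (closedBall z ((1 / 2) ^ n)) := by
        rw [lintegral_tsum fun n =>
          (measurable_const.indicator measurableSet_closedBall).aemeasurable]
        simp only [lintegral_indicator_const measurableSet_closedBall]
    _ ≤ ∑' n : ℕ, ENNReal.ofReal (2 ^ δ * (2 ^ δ * q) ^ n) * M := ENNReal.tsum_le_tsum shell_le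
    _ = ENNReal.ofReal (2 ^ δ * (1 - 2 ^ δ * (q : ℝ))⁻¹) * M := by
        rw [ENNReal.tsum_mul_right, ← ENNReal.ofReal_tsum_of_nonneg (fun n => by positivity)
          ((summable_geometric_of_lt_one (by positivity) hq).mul_left _), tsum_mul_left,
          tsum_geometric_of_lt_one (by positivity) hq]

end RieszKernel

section Doubling

/-- The factor by which a measure of doubling constant `D` shrinks when a disk is halved. The power
`D ^ 3` compares a disk with a disjoint disk of half its radius inside its double. -/
def reverseDoublingConst (D : ℝ≥0) : ℝ≥0 := D ^ 3 / (D ^ 3 + 1)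

lemma reverseDoublingConst_lt_one (D : ℝ≥0) : reverseDoublingConst D < 1 := by
  rw [reverseDoublingConst, div_lt_one (by positivity)]
  exact lt_add_one _

lemma reverseDoublingConst_pos {D : ℝ≥0} (hD : 0 < D) : 0 < reverseDoublingConst D := by
  unfold reverseDoublingConst; positivity

lemma tendsto_reverseDoublingConst_pow_mul (D : ℝ≥0) {M : ℝ≥0∞} (hM : M ≠ ∞) :
    Tendsto (fun n : ℕ => (reverseDoublingConst D : ℝ≥0∞) ^ n * M) atTop (𝓝 0) := by
  have hpow := ENNReal.tendsto_pow_atTop_nhds_zero_of_lt_one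
    (ENNReal.coe_lt_one_iff.mpr (reverseDoublingConst_lt_one D))
  simpa using ENNReal.Tendsto.mul_const hpow (Or.inr hM)

variable {μ : Measure ℂ} {D : ℝ≥0}

namespace IsDoubling

lemma measure_ball_two_pow_mul_le (h : IsDoubling μ D) (z : ℂ) {r : ℝ} (hr : 0 < r) (n : ℕ) :
    μ (ball z (2 ^ n * r)) ≤ (D : ℝ≥0∞) ^ n * μ (ball z r) := by
  induction n with
  | zero => simp
  | succ n ih =>
    calc μ (ball z (2 ^ (n + 1) * r)) = μ (ball z (2 * (2 ^ n * r))) := by rw [pow_succ', mul_assoc]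
      _ ≤ D * μ (ball z (2 ^ n * r)) := h z _ (by positivity)
      _ ≤ D * ((D : ℝ≥0∞) ^ n * μ (ball z r)) := by gcongr
      _ = (D : ℝ≥0∞) ^ (n + 1) * μ (ball z r) := by ring

lemma measure_ball_ne_top (h : IsDoubling μ D) {z : ℂ} {r : ℝ} (hr : 0 < r)
    (hfin : μ (ball z r) ≠ ∞) (R : ℝ) : μ (ball z R) ≠ ∞ := by
  obtain ⟨n, hn⟩ := pow_unbounded_of_one_lt (R / r) one_lt_two
  have hsub : ball z R ⊆ ball z (2 ^ n * r) := ball_subset_ball ((div_lt_iff₀ hr).mp hn).le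
  exact ne_top_of_le_ne_top (ENNReal.mul_ne_top (ENNReal.pow_ne_top ENNReal.coe_ne_top) hfin)
    ((measure_mono hsub).trans (h.measure_ball_two_pow_mul_le z hr n))

lemma measure_ball_le_mul_measure_ball_two_mul (h : IsDoubling μ D) (z : ℂ) {r : ℝ} (hr : 0 < r) :
    μ (ball z r) ≤ reverseDoublingConst D * μ (ball z (2 * r)) := by
  set y : ℂ := z + ((3 * r / 2 : ℝ) : ℂ) with hy
  have hdist : dist z y = 3 * r / 2 := by
    rw [dist_comm, dist_eq_norm, hy, add_sub_cancel_left, Complex.norm_of_nonneg (by positivity)]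
  have compare : μ (ball z r) ≤ (D : ℝ≥0∞) ^ 3 * μ (ball y (r / 2)) :=
    (measure_mono (ball_subset_ball' (by linarith))).trans
      (h.measure_ball_two_pow_mul_le y (by positivity) 3)
  have disjoint_add_le : μ (ball z r) + μ (ball y (r / 2)) ≤ μ (ball z (2 * r)) := by
    rw [← measure_union (ball_disjoint_ball (by linarith)) measurableSet_ball]
    exact measure_mono (union_subset (ball_subset_ball (by linarith))
      (ball_subset_ball' (by rw [dist_comm]; linarith)))
  have mul_le : μ (ball z r) * ((D ^ 3 + 1 : ℝ≥0) : ℝ≥0∞) ≤ (D ^ 3 : ℝ≥0) * μ (ball z (2 * r)) := by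
    push_cast
    calc μ (ball z r) * ((D : ℝ≥0∞) ^ 3 + 1) = D ^ 3 * μ (ball z r) + μ (ball z r) := by ring
      _ ≤ D ^ 3 * μ (ball z r) + D ^ 3 * μ (ball y (r / 2)) := by gcongr
      _ = D ^ 3 * (μ (ball z r) + μ (ball y (r / 2))) := by ring
      _ ≤ _ := by gcongr
  rw [reverseDoublingConst, ENNReal.coe_div (by positivity), ENNReal.mul_comm_div, mul_div_assoc',
    ENNReal.le_div_iff_mul_le (Or.inl (by simp)) (Or.inl ENNReal.coe_ne_top)]
  exact mul_le

lemma measure_ball_le_pow_mul_measure_ball (h : IsDoubling μ D) (z : ℂ) {r : ℝ} (hr : 0 < r)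
    (n : ℕ) :
    μ (ball z r) ≤ (reverseDoublingConst D : ℝ≥0∞) ^ n * μ (ball z (2 ^ n * r)) := by
  induction n with
  | zero => simp
  | succ n ih =>
    calc μ (ball z r) ≤ (reverseDoublingConst D : ℝ≥0∞) ^ n * μ (ball z (2 ^ n * r)) := ih
      _ ≤ (reverseDoublingConst D : ℝ≥0∞) ^ n *
          (reverseDoublingConst D * μ (ball z (2 * (2 ^ n * r)))) := by
        gcongr; exact h.measure_ball_le_mul_measure_ball_two_mul z (by positivity)
      _ = _ := by rw [← mul_assoc, ← pow_succ, ← mul_assoc, ← pow_succ']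

lemma measure_closedBall_half_pow_le (h : IsDoubling μ D) (z : ℂ) (n : ℕ) :
    μ (closedBall z ((1 / 2) ^ n)) ≤ (reverseDoublingConst D : ℝ≥0∞) ^ n * μ (ball z 2) := by
  have hr : (0 : ℝ) < (1 / 2) ^ n := by positivity
  calc μ (closedBall z ((1 / 2) ^ n)) ≤ μ (ball z (2 * (1 / 2) ^ n)) :=
        measure_mono (closedBall_subset_ball (by linarith))
    _ ≤ (reverseDoublingConst D : ℝ≥0∞) ^ n * μ (ball z (2 ^ n * (2 * (1 / 2) ^ n))) :=
        h.measure_ball_le_pow_mul_measure_ball z (by positivity) n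
    _ = (reverseDoublingConst D : ℝ≥0∞) ^ n * μ (ball z 2) := by
        rw [mul_left_comm, ← mul_pow]; norm_num

lemma measure_singleton_eq_zero (h : IsDoubling μ D) {z : ℂ} (hfin : μ (ball z 2) ≠ ∞) :
    μ {z} = 0 :=
  le_antisymm (ge_of_tendsto' (tendsto_reverseDoublingConst_pow_mul D hfin) fun n =>
    (measure_mono (by simp)).trans (h.measure_closedBall_half_pow_le z n)) bot_le

lemma measure_ball_two_le (h : IsDoubling μ D) (hD : 1 ≤ D) (z : ℂ) :
    μ (ball z 2) ≤ ENNReal.ofReal (D ^ 2 * (1 + ‖z‖) ^ Real.logb 2 D) * μ (ball 0 1) := by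
  obtain ⟨n, hn, hn'⟩ := exists_nat_pow_near (x := 1 + ‖z‖) (by simp) one_lt_two
  have hD' : (1 : ℝ) ≤ D := by exact_mod_cast hD
  have hD_pow : (D : ℝ) ^ n = ((2 : ℝ) ^ n) ^ Real.logb 2 D := by
    rw [← Real.rpow_natCast_mul (by norm_num), mul_comm, Real.rpow_mul_natCast (by norm_num),
      Real.rpow_logb (by norm_num) (by norm_num) (by linarith)]
  calc μ (ball z 2) ≤ μ (ball 0 (2 ^ (n + 2) * 1)) := by
        refine measure_mono (ball_subset_ball' ?_)
        rw [dist_zero_right]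
        linarith [pow_succ (2 : ℝ) (n + 1), one_le_pow₀ (one_le_two (α := ℝ)) (n := n),
          pow_succ (2 : ℝ) n]
    _ ≤ (D : ℝ≥0∞) ^ (n + 2) * μ (ball 0 1) := h.measure_ball_two_pow_mul_le 0 one_pos _
    _ = ENNReal.ofReal ((D : ℝ) ^ 2 * D ^ n) * μ (ball 0 1) := by
        rw [← pow_add, add_comm 2 n, ENNReal.ofReal_pow (by positivity), ENNReal.ofReal_coe_nnreal]
    _ ≤ _ := by
        gcongr
        rw [hD_pow]
        exact Real.rpow_le_rpow (by positivity) hn (Real.logb_nonneg (by norm_num) hD')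

end IsDoubling

lemma exists_forall_isDoubling_le_measure_ball (D : ℝ≥0) {A : ℝ≥0∞} (hA : A ≠ ∞) :
    ∃ R : ℝ, 1 ≤ R ∧ ∀ (μ : Measure ℂ) (z : ℂ), IsDoubling μ D → 1 ≤ μ (ball z 1) →
      A ≤ μ (ball z R) := by
  obtain ⟨n, hn⟩ := ((tendsto_reverseDoublingConst_pow_mul D hA).eventually_lt_const
    zero_lt_one).exists
  refine ⟨2 ^ n, one_le_pow₀ (by norm_num), fun μ z hμ h1 => ?_⟩
  have hR := hμ.measure_ball_le_pow_mul_measure_ball z one_pos n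
  rw [mul_one] at hR
  by_contra! hlt
  exact (h1.trans (hR.trans (by gcongr))).not_gt hn

end Doubling

/-- `ν` has no atoms and its Riesz potential of order `δ` over the unit disk about `z` is at most
`K (1 + ‖z‖) ^ γ`. Doubling measures satisfy this, and it controls their logarithmic potentials.
Atoms have to be excluded separately, because `0 ^ (-δ)` is `0`. -/
structure RieszBounded {E : Type*} [NormedAddCommGroup E] [MeasurableSpace E] (ν : Measure E)
    (K δ γ : ℝ) : Prop where
  measure_singleton : ∀ z, ν {z} = 0
  lintegral_le : ∀ z, ∫⁻ w in ball z 1, ENNReal.ofReal (‖z - w‖ ^ (-δ)) ∂ν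
    ≤ ENNReal.ofReal (K * (1 + ‖z‖) ^ γ)

lemma exists_forall_isDoubling_rieszBounded {D : ℝ≥0} (hD : 1 ≤ D) :
    ∃ K δ γ : ℝ, 0 < K ∧ 0 < δ ∧ 0 ≤ γ ∧
      ∀ μ : Measure ℂ, IsDoubling μ D → μ (ball 0 1) = 1 → RieszBounded μ K δ γ := by
  have hD' : (1 : ℝ) ≤ D := by exact_mod_cast hD
  set q := reverseDoublingConst D
  have hq0 : (0 : ℝ) < q := reverseDoublingConst_pos (zero_lt_one.trans_le hD)
  have hq1 : (q : ℝ) < 1 := reverseDoublingConst_lt_one D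
  -- Any exponent below `-logb 2 q` makes the dyadic series of the Riesz kernel converge.
  obtain ⟨δ, hδ, hδq⟩ : ∃ δ : ℝ, 0 < δ ∧ 2 ^ δ * (q : ℝ) < 1 := by
    have hlog := Real.logb_neg one_lt_two hq0 hq1
    refine ⟨-Real.logb 2 q / 2, by linarith, ?_⟩
    nth_rw 2 [← Real.rpow_logb (b := 2) (by norm_num) (by norm_num) hq0]
    rw [← Real.rpow_add (by norm_num)]
    exact Real.rpow_lt_one_of_one_lt_of_neg one_lt_two (by linarith)
  have : 0 < 1 - 2 ^ δ * (q : ℝ) := sub_pos.mpr hδq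
  refine ⟨2 ^ δ * (1 - 2 ^ δ * (q : ℝ))⁻¹ * D ^ 2, δ, Real.logb 2 D, by positivity, hδ,
    Real.logb_nonneg one_lt_two hD', fun μ hμ h1 => ?_⟩
  have hball (z : ℂ) : μ (ball z 2) ≤ ENNReal.ofReal (D ^ 2 * (1 + ‖z‖) ^ Real.logb 2 D) := by
    simpa [h1] using hμ.measure_ball_two_le hD z
  refine ⟨fun z => hμ.measure_singleton_eq_zero (ne_top_of_le_ne_top ENNReal.ofReal_ne_top
    (hball z)), fun z => ?_⟩
  calc _ ≤ ENNReal.ofReal (2 ^ δ * (1 - 2 ^ δ * (q : ℝ))⁻¹) * μ (ball z 2) :=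
        lintegral_norm_sub_rpow_neg_le hδ hδq (hμ.measure_closedBall_half_pow_le z)
    _ ≤ ENNReal.ofReal (2 ^ δ * (1 - 2 ^ δ * (q : ℝ))⁻¹) *
          ENNReal.ofReal (D ^ 2 * (1 + ‖z‖) ^ Real.logb 2 D) := by gcongr; exact hball z
    _ = _ := by rw [← ENNReal.ofReal_mul (by positivity)]; ring_nf

section LogKernel

variable {E : Type*} [NormedAddCommGroup E] {z w : E} {r R t : ℝ}

lemma log_div_le_rpow_div_mul_rpow_neg {δ x : ℝ} (hδ : 0 < δ) (hr : 0 ≤ r) (hx : 0 ≤ x) :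
    Real.log (r / x) ≤ r ^ δ / δ * x ^ (-δ) :=
  calc Real.log (r / x) ≤ (r / x) ^ δ / δ := Real.log_le_rpow_div (by positivity) hδ
    _ = r ^ δ / δ * x ^ (-δ) := by rw [Real.div_rpow hr hx, Real.rpow_neg hx]; ring

lemma log_div_norm_sub_nonneg (hw : w ∈ ball z r) : 0 ≤ Real.log (r / ‖z - w‖) := by
  rw [mem_ball_iff_norm'] at hw
  rcases (norm_nonneg (z - w)).eq_or_lt with h0 | h0
  · simp [← h0]
  · exact Real.log_nonneg ((one_le_div h0).mpr hw.le)

lemma abs_log_norm_sub_le (z : E) (hw : ‖w‖ ≤ R) : |Real.log ‖z - w‖| ≤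
    (ball z 1).indicator (fun w => Real.log (1 / ‖z - w‖)) w + Real.log (1 + ‖z‖ + R) := by
  have hz := norm_nonneg z
  have hw0 := norm_nonneg w
  by_cases hball : w ∈ ball z 1
  · have hlog := log_div_norm_sub_nonneg hball
    rw [indicator_of_mem hball]
    rw [one_div, Real.log_inv] at hlog ⊢
    rw [abs_of_nonpos (by linarith)]
    linarith [Real.log_nonneg (show 1 ≤ 1 + ‖z‖ + R by linarith)]
  · rw [indicator_of_notMem hball, zero_add]
    rw [mem_ball_iff_norm', not_lt] at hball
    rw [abs_of_nonneg (Real.log_nonneg hball)]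
    exact Real.log_le_log (by linarith) (by linarith [norm_sub_le z w])

/-- `k` is a continuous substitute for the logarithmic kernel `log ‖x‖` which differs from it only
for `‖x‖ < t`, and there by at most `log (t / ‖x‖)`. -/
structure IsLogRegularization (k : E → ℝ) (t : ℝ) : Prop where
  continuous : Continuous k
  eq_log_norm : ∀ x, t ≤ ‖x‖ → k x = Real.log ‖x‖
  abs_sub_log_norm_le : ∀ x, x ≠ 0 → ‖x‖ < t → |k x - Real.log ‖x‖| ≤ Real.log (t / ‖x‖)

lemma isLogRegularization_log_max (ht : 0 < t) :
    IsLogRegularization (fun x : E => Real.log (max ‖x‖ t)) t where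
  continuous := Continuous.log (by fun_prop) fun x => (lt_max_of_lt_right ht).ne'
  eq_log_norm x hx := by rw [max_eq_left hx]
  abs_sub_log_norm_le x hx hxt := by
    have hx0 : 0 < ‖x‖ := norm_pos_iff.mpr hx
    rw [max_eq_right hxt.le, ← Real.log_div ht.ne' hx0.ne',
      abs_of_nonneg (Real.log_nonneg ((one_le_div hx0).mpr hxt.le))]

lemma IsLogRegularization.abs_sub_log_norm_sub_le {k : E → ℝ} (hk : IsLogRegularization k t)
    (hne : w ≠ z) :
    |k (z - w) - Real.log ‖z - w‖| ≤
      (ball z t).indicator (fun w => Real.log (t / ‖z - w‖)) w := by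
  by_cases hball : w ∈ ball z t
  · rw [indicator_of_mem hball]
    exact hk.abs_sub_log_norm_le _ (sub_ne_zero.mpr hne.symm) (mem_ball_iff_norm'.mp hball)
  · rw [indicator_of_notMem hball]
    rw [mem_ball_iff_norm', not_lt] at hball
    simp [hk.eq_log_norm _ hball]

lemma tendsto_mul_rpow_div_nhdsGT_zero {δ : ℝ} (hδ : 0 < δ) (A : ℝ) :
    Tendsto (fun t : ℝ => A * t ^ δ / δ) (𝓝[>] 0) (𝓝 0) := by
  have hpow : Tendsto (fun t : ℝ => t ^ δ) (𝓝 0) (𝓝 0) := by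
    simpa [Real.zero_rpow hδ.ne'] using (Real.continuousAt_rpow_const 0 δ (Or.inr hδ.le)).tendsto
  simpa using ((hpow.const_mul A).div_const δ).mono_left nhdsWithin_le_nhds

end LogKernel

section LogPotential

variable {E : Type*} [NormedAddCommGroup E] [MeasurableSpace E]
  {ν ν' : Measure E} {K δ γ R r : ℝ}

namespace RieszBounded

lemma mono (h : RieszBounded ν K δ γ) (hle : ν' ≤ ν) : RieszBounded ν' K δ γ where
  measure_singleton z := le_antisymm ((hle _).trans (h.measure_singleton z).le) bot_le
  lintegral_le z :=
    (lintegral_mono' (Measure.restrict_mono subset_rfl hle) le_rfl).trans (h.lintegral_le z)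

lemma smul (h : RieszBounded ν K δ γ) {c : ℝ} (hc : 0 ≤ c) :
    RieszBounded (ENNReal.ofReal c • ν) (c * K) δ γ where
  measure_singleton z := by simp [h.measure_singleton z]
  lintegral_le z := by
    rw [Measure.restrict_smul, lintegral_smul_measure, mul_assoc, ENNReal.ofReal_mul hc,
      smul_eq_mul]
    gcongr
    exact h.lintegral_le z

lemma ae_ne (h : RieszBounded ν K δ γ) (z : E) : ∀ᵐ w ∂ν, w ≠ z := by
  simpa [ae_iff] using h.measure_singleton z

end RieszBounded

/-- The logarithmic potential of `ν`, normalised so that its Laplacian on `ℂ` is `2 * π * ν`. -/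
def logPotential (ν : Measure E) (z : E) : ℝ := ∫ w, Real.log ‖z - w‖ ∂ν

lemma logPotential_smul_measure {c : ℝ} (hc : 0 ≤ c) (ν : Measure E) (z : E) :
    logPotential (ENNReal.ofReal c • ν) z = c * logPotential ν z := by
  simp [logPotential, integral_smul_measure, ENNReal.toReal_ofReal hc]

/-- A finite charge `ν` carried by the disk of radius `R` whose Riesz potentials are under control,
together with the sign conditions on the parameters: the measures with continuous logarithmic
potential to which the polynomial construction applies. -/
structure AdmissibleCharge (ν : Measure E) (K δ γ R : ℝ) : Prop
    extends RieszBounded ν K δ γ where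
  isFiniteMeasure : IsFiniteMeasure ν
  ae_mem_ball : ∀ᵐ w ∂ν, w ∈ ball 0 R
  K_nonneg : 0 ≤ K
  δ_pos : 0 < δ
  γ_nonneg : 0 ≤ γ
  one_le_R : 1 ≤ R

namespace AdmissibleCharge

lemma mono_measure (h : AdmissibleCharge ν K δ γ R) (hle : ν' ≤ ν) :
    AdmissibleCharge ν' K δ γ R :=
  have := h.isFiniteMeasure
  { h with
    toRieszBounded := h.toRieszBounded.mono hle
    isFiniteMeasure := isFiniteMeasure_of_le ν hle
    ae_mem_ball := h.ae_mem_ball.filter_mono (ae_mono hle) }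

lemma ae_abs_log_norm_sub_le (h : AdmissibleCharge ν K δ γ R) (z : E) :
    ∀ᵐ w ∂ν, |Real.log ‖z - w‖| ≤
      (ball z 1).indicator (fun w => Real.log (1 / ‖z - w‖)) w + Real.log (1 + ‖z‖ + R) := by
  filter_upwards [h.ae_mem_ball] with w hw
  exact abs_log_norm_sub_le z (mem_ball_zero_iff.mp hw).le

end AdmissibleCharge

variable [BorelSpace E]

lemma measurable_log_div_norm_sub (z : E) (r : ℝ) :
    Measurable fun w => Real.log (r / ‖z - w‖) := by
  have : Measurable fun w => ‖z - w‖ := (by fun_prop : Continuous fun w => ‖z - w‖).measurable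
  fun_prop

namespace RieszBounded

lemma lintegral_mul_rpow_neg_le (h : RieszBounded ν K δ γ) (z : E) (hr1 : r ≤ 1) {a : ℝ}
    (ha : 0 ≤ a) :
    ∫⁻ w in ball z r, ENNReal.ofReal (a * ‖z - w‖ ^ (-δ)) ∂ν
      ≤ ENNReal.ofReal (a * (K * (1 + ‖z‖) ^ γ)) := by
  have : Measurable fun w => ‖z - w‖ := (by fun_prop : Continuous fun w => ‖z - w‖).measurable
  simp_rw [ENNReal.ofReal_mul ha]
  rw [lintegral_const_mul _ (by fun_prop)]
  gcongr
  exact (lintegral_mono_set (ball_subset_ball hr1)).trans (h.lintegral_le z)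

lemma lintegral_log_div_le (h : RieszBounded ν K δ γ) (hδ : 0 < δ) (z : E) (hr : 0 < r)
    (hr1 : r ≤ 1) :
    ∫⁻ w in ball z r, ENNReal.ofReal (Real.log (r / ‖z - w‖)) ∂ν
      ≤ ENNReal.ofReal (K * (1 + ‖z‖) ^ γ * r ^ δ / δ) :=
  calc ∫⁻ w in ball z r, ENNReal.ofReal (Real.log (r / ‖z - w‖)) ∂ν
      ≤ ∫⁻ w in ball z r, ENNReal.ofReal (r ^ δ / δ * ‖z - w‖ ^ (-δ)) ∂ν := by
        gcongr
        exact log_div_le_rpow_div_mul_rpow_neg hδ hr.le (norm_nonneg _)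
    _ ≤ ENNReal.ofReal (r ^ δ / δ * (K * (1 + ‖z‖) ^ γ)) :=
        h.lintegral_mul_rpow_neg_le z hr1 (by positivity)
    _ = ENNReal.ofReal (K * (1 + ‖z‖) ^ γ * r ^ δ / δ) := by ring_nf

lemma measure_ball_le (h : RieszBounded ν K δ γ) (hδ : 0 ≤ δ) (z : E) (hr : 0 < r)
    (hr1 : r ≤ 1) : ν (ball z r) ≤ ENNReal.ofReal (K * (1 + ‖z‖) ^ γ * r ^ δ) :=
  calc ν (ball z r) = ∫⁻ _ in ball z r, 1 ∂ν := by simp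
    _ ≤ ∫⁻ w in ball z r, ENNReal.ofReal (r ^ δ * ‖z - w‖ ^ (-δ)) ∂ν := by
        refine lintegral_mono_ae ?_
        filter_upwards [ae_restrict_mem measurableSet_ball, ae_restrict_of_ae (h.ae_ne z)]
          with w hw hne
        have h0 : 0 < ‖z - w‖ := norm_sub_pos_iff.mpr hne.symm
        rw [ENNReal.one_le_ofReal, Real.rpow_neg h0.le, ← div_eq_mul_inv,
          ← Real.div_rpow hr.le h0.le]
        exact Real.one_le_rpow ((one_le_div h0).mpr (mem_ball_iff_norm'.mp hw).le) hδ
    _ ≤ ENNReal.ofReal (r ^ δ * (K * (1 + ‖z‖) ^ γ)) :=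
        h.lintegral_mul_rpow_neg_le z hr1 (by positivity)
    _ = ENNReal.ofReal (K * (1 + ‖z‖) ^ γ * r ^ δ) := by ring_nf

lemma integrableOn_log_div (h : RieszBounded ν K δ γ) (hδ : 0 < δ) (z : E) (hr : 0 < r)
    (hr1 : r ≤ 1) : IntegrableOn (fun w => Real.log (r / ‖z - w‖)) (ball z r) ν := by
  refine ⟨(measurable_log_div_norm_sub z r).aestronglyMeasurable, ?_⟩
  rw [hasFiniteIntegral_iff_ofReal]
  · exact (h.lintegral_log_div_le hδ z hr hr1).trans_lt ENNReal.ofReal_lt_top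
  · filter_upwards [ae_restrict_mem measurableSet_ball] with w hw using log_div_norm_sub_nonneg hw

lemma setIntegral_log_div_le (h : RieszBounded ν K δ γ) (hK : 0 ≤ K) (hδ : 0 < δ) (z : E)
    (hr : 0 < r) (hr1 : r ≤ 1) :
    ∫ w in ball z r, Real.log (r / ‖z - w‖) ∂ν ≤ K * (1 + ‖z‖) ^ γ * r ^ δ / δ := by
  rw [integral_eq_lintegral_of_nonneg_ae ?_
    (measurable_log_div_norm_sub z r).aestronglyMeasurable]
  · exact ENNReal.toReal_le_of_le_ofReal (by positivity) (h.lintegral_log_div_le hδ z hr hr1)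
  · filter_upwards [ae_restrict_mem measurableSet_ball] with w hw using log_div_norm_sub_nonneg hw

end RieszBounded

namespace AdmissibleCharge

lemma integrable_indicator_log (h : AdmissibleCharge ν K δ γ R) (z : E) :
    Integrable ((ball z 1).indicator fun w => Real.log (1 / ‖z - w‖)) ν :=
  (h.integrableOn_log_div h.δ_pos z one_pos le_rfl).integrable_indicator measurableSet_ball

lemma integrable_log (h : AdmissibleCharge ν K δ γ R) (z : E) :
    Integrable (fun w => Real.log ‖z - w‖) ν := by
  have := h.isFiniteMeasure
  have : Measurable fun w => ‖z - w‖ := (by fun_prop : Continuous fun w => ‖z - w‖).measurable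
  exact ((h.integrable_indicator_log z).add (integrable_const _)).mono'
    (by fun_prop : Measurable _).aestronglyMeasurable (h.ae_abs_log_norm_sub_le z)

lemma integral_abs_log_le (h : AdmissibleCharge ν K δ γ R) (z : E) :
    ∫ w, |Real.log ‖z - w‖| ∂ν ≤ K * (1 + ‖z‖) ^ γ / δ + ν.real univ * Real.log (1 + ‖z‖ + R) := by
  have := h.isFiniteMeasure
  calc ∫ w, |Real.log ‖z - w‖| ∂ν
      ≤ ∫ w, ((ball z 1).indicator (fun w => Real.log (1 / ‖z - w‖)) w
          + Real.log (1 + ‖z‖ + R)) ∂ν :=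
        integral_mono_ae (h.integrable_log z).abs
          ((h.integrable_indicator_log z).add (integrable_const _)) (h.ae_abs_log_norm_sub_le z)
    _ = ∫ w in ball z 1, Real.log (1 / ‖z - w‖) ∂ν + ν.real univ * Real.log (1 + ‖z‖ + R) := by
        rw [integral_add (h.integrable_indicator_log z) (integrable_const _),
          integral_indicator measurableSet_ball, integral_const, smul_eq_mul]
    _ ≤ K * (1 + ‖z‖) ^ γ / δ + ν.real univ * Real.log (1 + ‖z‖ + R) := by
        gcongr
        simpa using h.setIntegral_log_div_le h.K_nonneg h.δ_pos z one_pos le_rfl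

lemma logPotential_le (h : AdmissibleCharge ν K δ γ R) (z : E) :
    logPotential ν z ≤ ν.real univ * Real.log (‖z‖ + R) := by
  have := h.isFiniteMeasure
  rw [← smul_eq_mul, ← integral_const]
  refine integral_mono_ae (h.integrable_log z) (integrable_const _) ?_
  filter_upwards [h.ae_mem_ball] with w hw
  rw [mem_ball_zero_iff] at hw
  rcases (norm_nonneg (z - w)).eq_or_lt with h0 | h0
  · simpa [← h0] using Real.log_nonneg (by linarith [norm_nonneg z, h.one_le_R])
  · exact Real.log_le_log h0 (by linarith [norm_sub_le z w])

lemma le_logPotential (h : AdmissibleCharge ν K δ γ R) {z : E} (hz : R < ‖z‖) :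
    ν.real univ * Real.log (‖z‖ - R) ≤ logPotential ν z := by
  have := h.isFiniteMeasure
  rw [← smul_eq_mul, ← integral_const]
  refine integral_mono_ae (integrable_const _) (h.integrable_log z) ?_
  filter_upwards [h.ae_mem_ball] with w hw
  rw [mem_ball_zero_iff] at hw
  exact Real.log_le_log (by linarith) (by linarith [norm_sub_norm_le z w])

lemma logPotential_add {τ σ : Measure E} (h : AdmissibleCharge (τ + σ) K δ γ R) (z : E) :
    logPotential (τ + σ) z = logPotential τ z + logPotential σ z :=
  integral_add_measure ((h.mono_measure (Measure.le_add_right le_rfl)).integrable_log z)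
    ((h.mono_measure (Measure.le_add_left le_rfl)).integrable_log z)

section Regularization

variable [ProperSpace E] {k : E → ℝ}

lemma integrable_comp_sub (h : AdmissibleCharge ν K δ γ R) (hk : Continuous k) (z : E) :
    Integrable (fun w => k (z - w)) ν := by
  have := h.isFiniteMeasure
  have hcont : Continuous fun w => k (z - w) := by fun_prop
  obtain ⟨C, hC⟩ := (isCompact_closedBall (0 : E) R).exists_bound_of_continuousOn hcont.continuousOn
  refine Integrable.of_bound hcont.measurable.aestronglyMeasurable C ?_
  filter_upwards [h.ae_mem_ball] with w hw using hC w (ball_subset_closedBall hw)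

lemma continuous_integral_comp_sub (h : AdmissibleCharge ν K δ γ R) (hk : Continuous k) :
    Continuous fun z => ∫ w, k (z - w) ∂ν := by
  have := h.isFiniteMeasure
  have hrestrict : ν.restrict (closedBall 0 R) = ν := Measure.restrict_eq_self_of_ae_mem <| by
    filter_upwards [h.ae_mem_ball] with w hw using ball_subset_closedBall hw
  rw [← hrestrict]
  refine continuous_parametric_integral_of_continuous (f := fun z w => k (z - w)) ?_
    (isCompact_closedBall _ _)
  simp only [Function.uncurry_def]
  fun_prop

lemma abs_integral_comp_sub_sub_logPotential_le (h : AdmissibleCharge ν K δ γ R) {t : ℝ}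
    (ht : 0 < t) (ht1 : t ≤ 1) (hk : IsLogRegularization k t) (z : E) :
    |(∫ w, k (z - w) ∂ν) - logPotential ν z| ≤ K * (1 + ‖z‖) ^ γ * t ^ δ / δ := by
  rw [logPotential, ← integral_sub (h.integrable_comp_sub hk.continuous z) (h.integrable_log z)]
  calc |∫ w, (k (z - w) - Real.log ‖z - w‖) ∂ν|
      ≤ ∫ w, (ball z t).indicator (fun w => Real.log (t / ‖z - w‖)) w ∂ν := by
        refine norm_integral_le_of_norm_le (G := ℝ) ((h.integrableOn_log_div h.δ_pos z ht
          ht1).integrable_indicator measurableSet_ball) ?_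
        filter_upwards [h.ae_ne z] with w hw using hk.abs_sub_log_norm_sub_le hw
    _ = ∫ w in ball z t, Real.log (t / ‖z - w‖) ∂ν := integral_indicator measurableSet_ball
    _ ≤ K * (1 + ‖z‖) ^ γ * t ^ δ / δ := h.setIntegral_log_div_le h.K_nonneg h.δ_pos z ht ht1

lemma eventually_forall_isLogRegularization (h : AdmissibleCharge ν K δ γ R) (S : ℝ) {e : ℝ}
    (he : 0 < e) : ∀ᶠ t in 𝓝[>] (0 : ℝ), ∀ k : E → ℝ, IsLogRegularization k t →
      ∀ z, ‖z‖ ≤ S → |(∫ w, k (z - w) ∂ν) - logPotential ν z| < e := by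
  filter_upwards [(tendsto_mul_rpow_div_nhdsGT_zero h.δ_pos (K * (1 + S) ^ γ)).eventually_lt_const
    he, Ioo_mem_nhdsGT one_pos] with t hte ht k hk z hz
  have hK := h.K_nonneg
  have hδ := h.δ_pos
  have hγ := h.γ_nonneg
  have ht0 := ht.1
  calc _ ≤ K * (1 + ‖z‖) ^ γ * t ^ δ / δ :=
        h.abs_integral_comp_sub_sub_logPotential_le ht.1 ht.2.le hk z
    _ ≤ K * (1 + S) ^ γ * t ^ δ / δ := by gcongr
    _ < e := hte

lemma continuous_logPotential (h : AdmissibleCharge ν K δ γ R) : Continuous (logPotential ν) := by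
  have hunif (S : ℝ) : TendstoUniformlyOn (fun (t : ℝ) z => ∫ w, Real.log (max ‖z - w‖ t) ∂ν)
      (logPotential ν) (𝓝[>] 0) (ball 0 S) := by
    rw [Metric.tendstoUniformlyOn_iff]
    intro e he
    filter_upwards [h.eventually_forall_isLogRegularization S he, self_mem_nhdsWithin]
      with t hclose ht z hz
    rw [dist_comm, Real.dist_eq]
    exact hclose _ (isLogRegularization_log_max ht) z (mem_ball_zero_iff.mp hz).le
  have hcont (S : ℝ) : ContinuousOn (logPotential ν) (ball 0 S) := by
    refine (hunif S).continuousOn (Eventually.frequently ?_)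
    filter_upwards [self_mem_nhdsWithin] with t ht
    exact (h.continuous_integral_comp_sub (isLogRegularization_log_max ht).continuous).continuousOn
  exact continuous_iff_continuousAt.mpr fun z =>
    (hcont (‖z‖ + 1)).continuousAt (isOpen_ball.mem_nhds (by simp))

end Regularization

end AdmissibleCharge

end LogPotential

section SubharmonicPotential

lemma integrable_prod_of_integral_norm_le {α β F : Type*} [MeasurableSpace α] [MeasurableSpace β]
    [NormedAddCommGroup F] {μ : Measure α} {ν : Measure β} [IsFiniteMeasure μ] [SFinite ν]
    {f : α × β → F} {C : ℝ} (hf : AEStronglyMeasurable f (μ.prod ν))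
    (hint : ∀ x, Integrable (fun y => f (x, y)) ν) (hC : ∀ x, ∫ y, ‖f (x, y)‖ ∂ν ≤ C) :
    Integrable f (μ.prod ν) := by
  refine (integrable_prod_iff hf).mpr ⟨.of_forall hint, ?_⟩
  refine .of_bound hf.norm.integral_prod_right' (C := C) (.of_forall fun x => ?_)
  rw [Real.norm_of_nonneg (integral_nonneg fun _ => norm_nonneg _)]
  exact hC x

variable {ν : Measure ℂ} {K δ γ R r : ℝ} {c z w : ℂ}

lemma log_norm_sub_le_circleAverage (hne : c ≠ w) (hr : 0 < r) :
    Real.log ‖c - w‖ ≤ Real.circleAverage (fun x => Real.log ‖x - w‖) c r := by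
  have hpos : 0 < ‖c - w‖ := norm_sub_pos_iff.mpr hne
  have hle : Real.log (r⁻¹ * ‖c - w‖) ≤ Real.posLog (r⁻¹ * ‖c - w‖) := le_max_right _ _
  rw [Real.log_mul (by positivity) hpos.ne', Real.log_inv] at hle
  rw [circleAverage_log_norm_sub_const_eq_log_radius_add_posLog hr.ne']
  linarith

namespace AdmissibleCharge

lemma integrable_log_norm_circleMap_sub (h : AdmissibleCharge ν K δ γ R) (c : ℂ) (hr : 0 ≤ r) :
    Integrable (fun p : ℝ × ℂ => Real.log ‖circleMap c r p.1 - p.2‖)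
      ((volume.restrict (Ioc 0 (2 * π))).prod ν) := by
  have := h.isFiniteMeasure
  have hmeas : Measurable fun p : ℝ × ℂ => Real.log ‖circleMap c r p.1 - p.2‖ := by
    have : Measurable (circleMap c r) := (continuous_circleMap c r).measurable
    fun_prop
  refine integrable_prod_of_integral_norm_le hmeas.aestronglyMeasurable
    (C := K * (1 + (‖c‖ + r)) ^ γ / δ + ν.real univ * Real.log (1 + (‖c‖ + r) + R))
    (fun θ => h.integrable_log (circleMap c r θ)) fun θ => ?_
  refine (h.integral_abs_log_le (circleMap c r θ)).trans ?_
  have hnorm : ‖circleMap c r θ‖ ≤ ‖c‖ + r := by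
    have := norm_le_norm_add_norm_sub' (circleMap c r θ) c
    rwa [mem_sphere_iff_norm.mp (circleMap_mem_sphere c hr θ)] at this
  have := h.K_nonneg
  have := h.δ_pos
  have := h.γ_nonneg
  have := h.one_le_R
  gcongr

lemma logPotential_le_circleAverage (h : AdmissibleCharge ν K δ γ R) (c : ℂ) (hr : 0 < r) :
    logPotential ν c ≤ Real.circleAverage (logPotential ν) c r := by
  have := h.isFiniteMeasure
  have hint := h.integrable_log_norm_circleMap_sub c hr.le
  have hswap : Real.circleAverage (logPotential ν) c r
      = ∫ w, Real.circleAverage (fun x => Real.log ‖x - w‖) c r ∂ν := by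
    simp only [Real.circleAverage, smul_eq_mul, logPotential,
      intervalIntegral.integral_of_le Real.two_pi_pos.le]
    rw [integral_const_mul, integral_integral_swap hint]
  rw [hswap]
  refine integral_mono_ae (h.integrable_log c) ?_ ?_
  · simp only [Real.circleAverage, smul_eq_mul, intervalIntegral.integral_of_le Real.two_pi_pos.le]
    exact hint.integral_prod_right.const_mul _
  · filter_upwards [h.ae_ne c] with w hw using log_norm_sub_le_circleAverage hw.symm hr

end AdmissibleCharge

end SubharmonicPotential

section LocalDecomposition

variable {ν : Measure ℂ} {K δ γ R r : ℝ} {c z w : ℂ}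

/-- The holomorphic function on `ball c r` which vanishes at `c` and whose real part is the
logarithmic potential of `ν` restricted to the complement of `ball c r`, up to a constant. -/
def farHolomorphicPotential (ν : Measure ℂ) (c : ℂ) (r : ℝ) (z : ℂ) : ℂ :=
  ∫ w in (ball c r)ᶜ, Complex.log ((z - w) / (c - w)) ∂ν

/-- The logarithmic potential of the part of `ν` in `ball c r`, normalised by the radius and with
the opposite sign. -/
def nearPotential (ν : Measure ℂ) (c : ℂ) (r : ℝ) (z : ℂ) : ℝ :=
  ∫ w in ball c r, Real.log (r / ‖z - w‖) ∂ν

lemma sub_div_sub_mem_slitPlane (hz : z ∈ ball c r) (hw : w ∉ ball c r) :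
    (z - w) / (c - w) ∈ Complex.slitPlane := by
  rw [mem_ball_iff_norm] at hz
  rw [mem_ball_iff_norm', not_lt] at hw
  have hpos : 0 < ‖c - w‖ := (norm_nonneg _).trans_lt (hz.trans_le hw)
  have hne : c - w ≠ 0 := norm_pos_iff.mp hpos
  rw [show (z - w) / (c - w) = 1 + (z - c) / (c - w) by field_simp; ring]
  refine Complex.mem_slitPlane_of_norm_lt_one ?_
  rw [norm_div, div_lt_one hpos]
  exact hz.trans_le hw

lemma sub_ne_zero_of_mem_ball_of_notMem_ball (hz : z ∈ ball c r) (hw : w ∉ ball c r) :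
    z - w ≠ 0 := sub_ne_zero.mpr fun hzw => hw (hzw ▸ hz)

lemma half_sub_le_norm_sub (hz : z ∈ ball w ((r - ‖w - c‖) / 2)) {u : ℂ} (hu : u ∉ ball c r) :
    (r - ‖w - c‖) / 2 ≤ ‖z - u‖ := by
  rw [mem_ball_iff_norm, not_lt] at hu
  rw [mem_ball_iff_norm] at hz
  have htri := norm_add₃_le (a := u - z) (b := z - w) (c := w - c)
  rw [sub_add_sub_cancel, sub_add_sub_cancel, norm_sub_rev u z] at htri
  linarith

lemma re_log_div {a b : ℂ} (ha : a ≠ 0) (hb : b ≠ 0) :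
    (Complex.log (a / b)).re = Real.log ‖a‖ - Real.log ‖b‖ := by
  rw [Complex.log_re, norm_div, Real.log_div (norm_ne_zero_iff.mpr ha) (norm_ne_zero_iff.mpr hb)]

lemma farHolomorphicPotential_self (ν : Measure ℂ) (hr : 0 < r) :
    farHolomorphicPotential ν c r c = 0 :=
  setIntegral_eq_zero_of_forall_eq_zero fun w hw => by
    rw [div_self (sub_ne_zero_of_mem_ball_of_notMem_ball (mem_ball_self hr) hw), Complex.log_one]

namespace AdmissibleCharge

lemma integrableOn_log_sub_div_sub (h : AdmissibleCharge ν K δ γ R) (hz : z ∈ ball c r) :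
    IntegrableOn (fun w => Complex.log ((z - w) / (c - w))) (ball c r)ᶜ ν := by
  have := h.isFiniteMeasure
  have hdom : Integrable (fun w => |Real.log ‖z - w‖| + |Real.log ‖c - w‖| + π) ν :=
    ((h.integrable_log z).abs.add (h.integrable_log c).abs).add (integrable_const _)
  refine hdom.restrict.mono' (by fun_prop : Measurable _).aestronglyMeasurable ?_
  filter_upwards [ae_restrict_mem measurableSet_ball.compl] with w hw
  have hz_ne := sub_ne_zero_of_mem_ball_of_notMem_ball hz hw
  have hc_ne := sub_ne_zero_of_mem_ball_of_notMem_ball (mem_ball_self (pos_of_mem_ball hz)) hw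
  calc ‖Complex.log ((z - w) / (c - w))‖
      ≤ |(Complex.log ((z - w) / (c - w))).re| + |(Complex.log ((z - w) / (c - w))).im| :=
        Complex.norm_le_abs_re_add_abs_im _
    _ ≤ |Real.log ‖z - w‖| + |Real.log ‖c - w‖| + π := by
        rw [re_log_div hz_ne hc_ne, Complex.log_im]
        exact add_le_add (abs_sub _ _) (Complex.abs_arg_le_pi _)

lemma differentiableOn_farHolomorphicPotential (h : AdmissibleCharge ν K δ γ R) (c : ℂ) (r : ℝ) :
    DifferentiableOn ℂ (farHolomorphicPotential ν c r) (ball c r) := by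
  have := h.isFiniteMeasure
  intro z₀ hz₀
  have hgap := mem_ball_iff_norm.mp hz₀
  set s : ℝ := (r - ‖z₀ - c‖) / 2 with hs
  have hs0 : 0 < s := by linarith
  have hsub : ball z₀ s ⊆ ball c r := ball_subset_ball' (by rw [dist_eq_norm]; linarith)
  refine (hasDerivAt_integral_of_dominated_loc_of_deriv_le (μ := ν.restrict (ball c r)ᶜ)
    (F := fun z w => Complex.log ((z - w) / (c - w))) (bound := fun _ => s⁻¹)
    (F' := fun z w => (z - w)⁻¹) (ball_mem_nhds z₀ hs0)
    (.of_forall fun z => (by fun_prop : Measurable _).aestronglyMeasurable)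
    (h.integrableOn_log_sub_div_sub hz₀) (by fun_prop : Measurable _).aestronglyMeasurable
    ?_ (integrable_const _) ?_).2.differentiableAt.differentiableWithinAt
  · filter_upwards [ae_restrict_mem measurableSet_ball.compl] with w hw z hz
    rw [norm_inv]
    exact inv_anti₀ hs0 (half_sub_le_norm_sub hz hw)
  · filter_upwards [ae_restrict_mem measurableSet_ball.compl] with w hw z hz
    have hc_ne := sub_ne_zero_of_mem_ball_of_notMem_ball (mem_ball_self (pos_of_mem_ball hz₀)) hw
    have hquot : HasDerivAt (fun z => (z - w) / (c - w)) (1 / (c - w)) z :=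
      ((hasDerivAt_id z).sub_const w).div_const _
    have hlog := hquot.clog (sub_div_sub_mem_slitPlane (hsub hz) hw)
    rwa [div_div_eq_mul_div, one_div_mul_cancel hc_ne, one_div] at hlog

lemma re_farHolomorphicPotential (h : AdmissibleCharge ν K δ γ R) (hz : z ∈ ball c r) :
    (farHolomorphicPotential ν c r z).re
      = ∫ w in (ball c r)ᶜ, (Real.log ‖z - w‖ - Real.log ‖c - w‖) ∂ν := by
  rw [farHolomorphicPotential, ← RCLike.re_eq_complex_re,
    ← integral_re (h.integrableOn_log_sub_div_sub hz)]
  refine setIntegral_congr_fun measurableSet_ball.compl fun w hw => ?_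
  exact re_log_div (sub_ne_zero_of_mem_ball_of_notMem_ball hz hw)
    (sub_ne_zero_of_mem_ball_of_notMem_ball (mem_ball_self (pos_of_mem_ball hz)) hw)

lemma ae_log_div_norm_sub (h : AdmissibleCharge ν K δ γ R) (hr : 0 < r) (z : ℂ) :
    ∀ᵐ w ∂ν, Real.log (r / ‖z - w‖) = Real.log r - Real.log ‖z - w‖ := by
  filter_upwards [h.ae_ne z] with w hw
  rw [Real.log_div hr.ne' (norm_sub_pos_iff.mpr hw.symm).ne']

lemma integrable_log_div (h : AdmissibleCharge ν K δ γ R) (hr : 0 < r) (z : ℂ) :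
    Integrable (fun w => Real.log (r / ‖z - w‖)) ν := by
  have := h.isFiniteMeasure
  exact ((integrable_const _).sub (h.integrable_log z)).congr
    ((h.ae_log_div_norm_sub hr z).mono fun w hw => hw.symm)

lemma logPotential_sub_logPotential (h : AdmissibleCharge ν K δ γ R) (hz : z ∈ ball c r) :
    logPotential ν z - logPotential ν c = nearPotential ν c r c - nearPotential ν c r z
      + (farHolomorphicPotential ν c r z).re := by
  have hr := pos_of_mem_ball hz
  have hnear : ∫ w in ball c r, (Real.log ‖z - w‖ - Real.log ‖c - w‖) ∂ν
      = nearPotential ν c r c - nearPotential ν c r z := by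
    rw [nearPotential, nearPotential, ← integral_sub (h.integrable_log_div hr c).integrableOn
      (h.integrable_log_div hr z).integrableOn]
    refine integral_congr_ae ?_
    filter_upwards [ae_restrict_of_ae (h.ae_log_div_norm_sub hr z),
      ae_restrict_of_ae (h.ae_log_div_norm_sub hr c)] with w hw hw'
    rw [hw, hw']
    ring
  have hint : Integrable (fun w => Real.log ‖z - w‖ - Real.log ‖c - w‖) ν :=
    (h.integrable_log z).sub (h.integrable_log c)
  rw [← hnear, h.re_farHolomorphicPotential hz, integral_add_compl measurableSet_ball hint,
    integral_sub (h.integrable_log z) (h.integrable_log c), logPotential, logPotential]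

lemma nearPotential_le (h : AdmissibleCharge ν K δ γ R) (hr : 0 < r) (hr1 : r ≤ 1)
    (hscale : (1 + ‖c‖) ^ γ * r ^ δ ≤ 1) (hz : z ∈ ball c r) :
    nearPotential ν c r z ≤ K * 2 ^ γ / δ := by
  have hK := h.K_nonneg
  have hδ := h.δ_pos
  have hγ := h.γ_nonneg
  have hrecentre : nearPotential ν c r z ≤ ∫ w in ball z r, Real.log (r / ‖z - w‖) ∂ν := by
    rw [nearPotential, ← integral_indicator measurableSet_ball,
      ← integral_indicator measurableSet_ball]
    have hint := h.integrable_log_div hr z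
    refine integral_mono (hint.indicator measurableSet_ball) (hint.indicator measurableSet_ball)
      fun w => ?_
    by_cases hball : w ∈ ball z r
    · rw [indicator_of_mem hball]
      exact indicator_le_self' (fun _ _ => log_div_norm_sub_nonneg hball) w
    · rw [indicator_of_notMem hball]
      rw [mem_ball_iff_norm', not_lt] at hball
      exact indicator_apply_le' (fun _ => Real.log_nonpos (by positivity)
        (div_le_one_of_le₀ hball (norm_nonneg _))) fun _ => le_rfl
  have hnorm : 1 + ‖z‖ ≤ 2 * (1 + ‖c‖) := by
    linarith [norm_le_norm_add_norm_sub' z c, mem_ball_iff_norm.mp hz, norm_nonneg c]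
  calc nearPotential ν c r z ≤ ∫ w in ball z r, Real.log (r / ‖z - w‖) ∂ν := hrecentre
    _ ≤ K * (1 + ‖z‖) ^ γ * r ^ δ / δ := h.setIntegral_log_div_le hK hδ z hr hr1
    _ ≤ K * (2 * (1 + ‖c‖)) ^ γ * r ^ δ / δ := by gcongr
    _ = K * 2 ^ γ * ((1 + ‖c‖) ^ γ * r ^ δ) / δ := by
        rw [Real.mul_rpow (by norm_num) (by positivity)]; ring
    _ ≤ K * 2 ^ γ * 1 / δ := by gcongr
    _ = K * 2 ^ γ / δ := by rw [mul_one]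

lemma neg_le_nearPotential (h : AdmissibleCharge ν K δ γ R) (hr1 : r ≤ 1)
    (hscale : (1 + ‖c‖) ^ γ * r ^ δ ≤ 1) (hz : z ∈ ball c r) :
    -K ≤ nearPotential ν c r z := by
  have := h.isFiniteMeasure
  have hr := pos_of_mem_ball hz
  have hmass : ν.real (ball c r) ≤ K := by
    refine ENNReal.toReal_le_of_le_ofReal h.K_nonneg
      ((h.measure_ball_le h.δ_pos.le c hr hr1).trans (ENNReal.ofReal_le_ofReal ?_))
    rw [mul_assoc]
    exact mul_le_of_le_one_right h.K_nonneg hscale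
  calc -K ≤ ν.real (ball c r) * -1 := by linarith
    _ = ∫ _ in ball c r, (-1 : ℝ) ∂ν := by simp
    _ ≤ nearPotential ν c r z := by
        refine integral_mono_ae (integrable_const _) (h.integrable_log_div hr z).integrableOn ?_
        filter_upwards [ae_restrict_mem measurableSet_ball, ae_restrict_of_ae (h.ae_ne z)]
          with w hw hne
        have hpos : 0 < ‖z - w‖ := norm_sub_pos_iff.mpr hne.symm
        have hdiam : ‖z - w‖ ≤ 2 * r := by
          linarith [norm_sub_le_norm_sub_add_norm_sub z c w, mem_ball_iff_norm.mp hz,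
            mem_ball_iff_norm'.mp hw]
        calc (-1 : ℝ) ≤ Real.log (1 / 2) := by
              rw [one_div, Real.log_inv]; linarith [Real.log_two_lt_d9]
          _ ≤ Real.log (r / ‖z - w‖) :=
              Real.log_le_log (by norm_num) ((le_div_iff₀ hpos).mpr (by linarith))

end AdmissibleCharge

/-- Bound for the distance of a logarithmic potential from the real part of a holomorphic function
on disks of radius at most `localScale`, in terms of the constants of `RieszBounded`. -/
def oscillationBound (K δ γ : ℝ) : ℝ := K * (2 ^ γ / δ + 1)

/-- The radius of the disk about `c` on which charges satisfying the bounds of `RieszBounded` have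
mass at most `K`. -/
def localScale (δ γ : ℝ) (c : ℂ) : ℝ := (1 + ‖c‖) ^ (-(γ / δ))

lemma localScale_pos (δ γ : ℝ) (c : ℂ) : 0 < localScale δ γ c :=
  Real.rpow_pos_of_pos (by positivity) _

lemma localScale_le_one (hδ : 0 < δ) (hγ : 0 ≤ γ) (c : ℂ) : localScale δ γ c ≤ 1 :=
  Real.rpow_le_one_of_one_le_of_nonpos (by simp) (by simp only [Left.neg_nonpos_iff]; positivity)

lemma rpow_mul_localScale_rpow (hδ : δ ≠ 0) (γ : ℝ) (c : ℂ) :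
    (1 + ‖c‖) ^ γ * localScale δ γ c ^ δ = 1 := by
  rw [localScale, ← Real.rpow_mul (by positivity), ← Real.rpow_add (by positivity), neg_mul,
    div_mul_cancel₀ _ hδ, add_neg_cancel, Real.rpow_zero]

lemma AdmissibleCharge.abs_logPotential_sub_sub_re_le (h : AdmissibleCharge ν K δ γ R)
    (hz : z ∈ ball c (localScale δ γ c)) :
    |logPotential ν z - logPotential ν c
      - (farHolomorphicPotential ν c (localScale δ γ c) z).re| ≤ oscillationBound K δ γ := by
  have hr := localScale_pos δ γ c
  have hr1 := localScale_le_one h.δ_pos h.γ_nonneg c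
  have hscale := (rpow_mul_localScale_rpow h.δ_pos.ne' γ c).le
  have hc_nonneg : 0 ≤ nearPotential ν c (localScale δ γ c) c :=
    setIntegral_nonneg measurableSet_ball fun w hw => log_div_norm_sub_nonneg hw
  have hc_le := h.nearPotential_le hr hr1 hscale (mem_ball_self hr)
  have hz_ge := h.neg_le_nearPotential hr1 hscale hz
  have hz_le := h.nearPotential_le hr hr1 hscale hz
  rw [h.logPotential_sub_logPotential hz, add_sub_cancel_right, oscillationBound, mul_add,
    mul_one, ← mul_div_assoc, abs_le]
  constructor <;> linarith [h.K_nonneg]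

end LocalDecomposition

section ProductsVanishingAtInfinity

variable {X ι : Type*} [TopologicalSpace X] [Fintype ι] {g : X → ℝ}

lemma exists_forall_le_of_tendsto_cocompact_zero (hg : Continuous g)
    (hlim : Tendsto g (cocompact X) (𝓝 0)) : ∃ M, ∀ z, g z ≤ M := by
  obtain ⟨M, hM⟩ := ((⟨⟨g, hg⟩, hlim⟩ : ZeroAtInftyContinuousMap X ℝ).isBounded_range).bddAbove
  exact ⟨M, fun z => hM (mem_range_self z)⟩

lemma tendsto_prod_cocompact_pi_zero (hg : Continuous g) (hg0 : ∀ z, 0 ≤ g z)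
    (hlim : Tendsto g (cocompact X) (𝓝 0)) :
    Tendsto (fun x : ι → X => ∏ i, g (x i)) (cocompact (ι → X)) (𝓝 0) := by
  obtain ⟨M, hM⟩ := exists_forall_le_of_tendsto_cocompact_zero hg hlim
  rw [← coprodᵢ_cocompact, Filter.coprodᵢ, tendsto_iSup]
  intro i
  have hrest (x : ι → X) :
      ∏ k ∈ Finset.univ.erase i, g (x k) ≤ ∏ _k ∈ Finset.univ.erase i, M :=
    Finset.prod_le_prod (fun k _ => hg0 (x k)) fun k _ => hM (x k)
  simp_rw [← Finset.mul_prod_erase _ _ (Finset.mem_univ i), mul_comm (g _)]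
  exact bdd_le_mul_tendsto_zero (.of_forall fun x => Finset.prod_nonneg fun k _ => hg0 (x k))
    (.of_forall hrest) (hlim.comp tendsto_comap)

end ProductsVanishingAtInfinity

section FeketePoints

variable {E ι : Type*} [NormedAddCommGroup E] [Fintype ι] {ψ : E → ℝ} {x : ι → E}

/-- The square of the weighted Vandermonde product `∏ i < k, ‖x i - x k‖ * ∏ i, exp (-ψ (x i))`
whose maximisers are Fekete points; taking the square avoids ordering the indices. -/
def feketeFunctional (ψ : E → ℝ) (x : ι → E) : ℝ :=
  ∏ i, ((∏ k ∈ Finset.univ.erase i, ‖x i - x k‖) * Real.exp (-ψ (x i)) ^ 2)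

/-- The dependence of the weighted Vandermonde product on its `j`-th point `w`. -/
def feketeFactor (ψ : E → ℝ) (x : ι → E) (j : ι) (w : E) : ℝ :=
  (∏ i ∈ Finset.univ.erase j, ‖w - x i‖) * Real.exp (-ψ w)

/-- The squared weighted Vandermonde product of the points other than the `j`-th. -/
def feketeCofactor (ψ : E → ℝ) (x : ι → E) (j : ι) : ℝ :=
  ∏ i ∈ Finset.univ.erase j,
    ((∏ k ∈ (Finset.univ.erase i).erase j, ‖x i - x k‖) * Real.exp (-ψ (x i)) ^ 2)

/-- Distinct points which maximise the weighted Vandermonde product in each variable separately. -/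
structure IsFekete (ψ : E → ℝ) (x : ι → E) : Prop where
  injective : Function.Injective x
  feketeFactor_le : ∀ j w, feketeFactor ψ x j w ≤ feketeFactor ψ x j (x j)

lemma feketeFactor_nonneg (ψ : E → ℝ) (x : ι → E) (j : ι) (w : E) : 0 ≤ feketeFactor ψ x j w := by
  unfold feketeFactor
  positivity

lemma feketeCofactor_nonneg (ψ : E → ℝ) (x : ι → E) (j : ι) : 0 ≤ feketeCofactor ψ x j := by
  unfold feketeCofactor
  positivity

lemma feketeFunctional_eq_sq_mul (ψ : E → ℝ) (x : ι → E) (j : ι) :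
    feketeFunctional ψ x = feketeFactor ψ x j (x j) ^ 2 * feketeCofactor ψ x j := by
  have hpair : ∀ i ∈ Finset.univ.erase j,
      (∏ k ∈ Finset.univ.erase i, ‖x i - x k‖) * Real.exp (-ψ (x i)) ^ 2
        = ‖x j - x i‖ * ((∏ k ∈ (Finset.univ.erase i).erase j, ‖x i - x k‖)
          * Real.exp (-ψ (x i)) ^ 2) := fun i hi => by
    have hj : j ∈ Finset.univ.erase i := by simpa using (Finset.ne_of_mem_erase hi).symm
    rw [← Finset.mul_prod_erase _ _ hj, norm_sub_rev (x i) (x j), mul_assoc]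
  rw [feketeFunctional, feketeFactor, feketeCofactor,
    ← Finset.mul_prod_erase _ _ (Finset.mem_univ j), Finset.prod_congr rfl hpair,
    Finset.prod_mul_distrib]
  ring

lemma feketeFactor_update (ψ : E → ℝ) (x : ι → E) (j : ι) (w v : E) :
    feketeFactor ψ (Function.update x j w) j v = feketeFactor ψ x j v := by
  refine congrArg (· * _) (Finset.prod_congr rfl fun i hi => ?_)
  rw [Function.update_of_ne (Finset.ne_of_mem_erase hi)]

lemma feketeCofactor_update (ψ : E → ℝ) (x : ι → E) (j : ι) (w : E) :
    feketeCofactor ψ (Function.update x j w) j = feketeCofactor ψ x j := by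
  refine Finset.prod_congr rfl fun i hi => ?_
  rw [Function.update_of_ne (Finset.ne_of_mem_erase hi)]
  refine congrArg (· * _) (Finset.prod_congr rfl fun k hk => ?_)
  rw [Function.update_of_ne (Finset.ne_of_mem_erase hk)]

lemma norm_sub_le_one_add_mul_one_add (a b : E) : ‖a - b‖ ≤ (1 + ‖a‖) * (1 + ‖b‖) := by
  nlinarith [norm_sub_le a b, mul_nonneg (norm_nonneg a) (norm_nonneg b)]

lemma prod_prod_erase_comm (f : ι → ℝ) :
    ∏ i, ∏ k ∈ Finset.univ.erase i, f k = ∏ i, f i ^ (Fintype.card ι - 1) := by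
  rw [Finset.prod_comm' (t' := Finset.univ) (s' := fun k => Finset.univ.erase k)
    (by simp [eq_comm])]
  simp [Finset.card_erase_of_mem]

lemma feketeFunctional_nonneg (ψ : E → ℝ) (x : ι → E) : 0 ≤ feketeFunctional ψ x := by
  unfold feketeFunctional
  positivity

lemma feketeFunctional_le (ψ : E → ℝ) (x : ι → E) :
    feketeFunctional ψ x ≤ ∏ i, ((1 + ‖x i‖) ^ (Fintype.card ι - 1) * Real.exp (-ψ (x i))) ^ 2 := by
  have hinner (i : ι) : ∏ k ∈ Finset.univ.erase i, ‖x i - x k‖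
      ≤ (1 + ‖x i‖) ^ (Fintype.card ι - 1) * ∏ k ∈ Finset.univ.erase i, (1 + ‖x k‖) :=
    calc _ ≤ ∏ k ∈ Finset.univ.erase i, ((1 + ‖x i‖) * (1 + ‖x k‖)) :=
          Finset.prod_le_prod (fun _ _ => norm_nonneg _) fun k _ =>
            norm_sub_le_one_add_mul_one_add _ _
      _ = _ := by simp [Finset.prod_mul_distrib, Finset.card_erase_of_mem]
  calc feketeFunctional ψ x
      ≤ ∏ i, ((1 + ‖x i‖) ^ (Fintype.card ι - 1) * (∏ k ∈ Finset.univ.erase i, (1 + ‖x k‖))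
          * Real.exp (-ψ (x i)) ^ 2) :=
        Finset.prod_le_prod (fun i _ => by positivity) fun i _ => by gcongr; exact hinner i
    _ = ∏ i, ((1 + ‖x i‖) ^ (Fintype.card ι - 1) * Real.exp (-ψ (x i))) ^ 2 := by
        rw [Finset.prod_mul_distrib, Finset.prod_mul_distrib, prod_prod_erase_comm,
          ← Finset.prod_mul_distrib, ← Finset.prod_mul_distrib]
        exact Finset.prod_congr rfl fun i _ => by ring

lemma prod_erase_norm_sub_pos (hx : Function.Injective x) (j : ι) :
    0 < ∏ i ∈ Finset.univ.erase j, ‖x j - x i‖ :=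
  Finset.prod_pos fun _ hi => norm_sub_pos_iff.mpr fun h => Finset.ne_of_mem_erase hi (hx h).symm

lemma IsFekete.feketeFactor_pos (hx : IsFekete ψ x) (j : ι) : 0 < feketeFactor ψ x j (x j) :=
  mul_pos (prod_erase_norm_sub_pos hx.injective j) (Real.exp_pos _)

lemma feketeFunctional_ne_zero_iff : feketeFunctional ψ x ≠ 0 ↔ Function.Injective x := by
  simp only [feketeFunctional, Finset.prod_ne_zero_iff, mul_ne_zero_iff, norm_ne_zero_iff,
    sub_ne_zero, Finset.mem_erase, Finset.mem_univ, and_true, true_implies, ne_eq, Real.exp_ne_zero,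
    pow_eq_zero_iff, OfNat.ofNat_ne_zero, not_false_eq_true]
  exact ⟨fun h i k hik => by_contra fun hne => h i k (Ne.symm hne) hik,
    fun h i k hne hik => hne (h hik).symm⟩

lemma isFekete_of_forall_feketeFunctional_le (hx : Function.Injective x)
    (hmax : ∀ y : ι → E, feketeFunctional ψ y ≤ feketeFunctional ψ x) : IsFekete ψ x := by
  refine ⟨hx, fun j w => ?_⟩
  have hcofactor : 0 < feketeCofactor ψ x j := by
    refine (feketeCofactor_nonneg ψ x j).lt_of_ne' fun h =>
      (feketeFunctional_ne_zero_iff (ψ := ψ)).mpr hx ?_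
    rw [feketeFunctional_eq_sq_mul ψ x j, h, mul_zero]
  have hupdate := hmax (Function.update x j w)
  rw [feketeFunctional_eq_sq_mul ψ x j, feketeFunctional_eq_sq_mul ψ _ j, feketeCofactor_update,
    feketeFactor_update, Function.update_self] at hupdate
  exact (sq_le_sq₀ (feketeFactor_nonneg ..) (feketeFactor_nonneg ..)).mp
    (le_of_mul_le_mul_right hupdate hcofactor)

lemma exists_isFekete [Infinite E] (hψ : Continuous ψ)
    (hdecay : Tendsto (fun z => (1 + ‖z‖) ^ (Fintype.card ι - 1) * Real.exp (-ψ z))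
      (cocompact E) (𝓝 0)) :
    ∃ x : ι → E, IsFekete ψ x := by
  have hcont : Continuous (feketeFunctional ψ : (ι → E) → ℝ) := by
    unfold feketeFunctional
    fun_prop
  have hvanish : Tendsto (feketeFunctional ψ) (cocompact (ι → E)) (𝓝 0) := by
    refine squeeze_zero (feketeFunctional_nonneg ψ) (feketeFunctional_le ψ) ?_
    refine tendsto_prod_cocompact_pi_zero
      (g := fun z => ((1 + ‖z‖) ^ (Fintype.card ι - 1) * Real.exp (-ψ z)) ^ 2)
      (by fun_prop) (fun z => by positivity) ?_
    simpa using hdecay.pow 2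
  obtain ⟨x₀, hx₀⟩ : ∃ x₀ : ι → E, Function.Injective x₀ :=
    ⟨_, (Infinite.natEmbedding E).injective.comp
      (Fin.val_injective.comp (Fintype.equivFin ι).injective)⟩
  have hpos : 0 < feketeFunctional ψ x₀ :=
    (feketeFunctional_nonneg ψ x₀).lt_of_ne' (feketeFunctional_ne_zero_iff.mpr hx₀)
  obtain ⟨x, hx⟩ := hcont.exists_forall_ge' x₀
    ((hvanish.eventually_lt_const hpos).mono fun _ h => h.le)
  exact ⟨x, isFekete_of_forall_feketeFunctional_le
    (feketeFunctional_ne_zero_iff.mp (hpos.trans_le (hx x₀)).ne') hx⟩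

end FeketePoints

section MinimumPrinciple

variable {s : ℂ → ℝ} {Ω : Set ℂ} {c w z : ℂ} {m r : ℝ}

lemma lt_circleAverage (hs : ContinuousOn s (sphere c |r|)) (hle : ∀ z ∈ sphere c |r|, m ≤ s z)
    (hw : w ∈ sphere c |r|) (hlt : m < s w) : m < Real.circleAverage s c r := by
  rw [← image_circleMap_Ioc] at hw
  obtain ⟨θ, hθ, rfl⟩ := hw
  have hint : ∫ _ in (0 : ℝ)..2 * π, m < ∫ θ in (0 : ℝ)..2 * π, s (circleMap c r θ) :=
    intervalIntegral.integral_lt_integral_of_continuousOn_of_le_of_exists_lt Real.two_pi_pos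
      continuousOn_const (hs.comp_continuous (continuous_circleMap c r)
        (circleMap_mem_sphere' c r)).continuousOn
      (fun θ _ => hle _ (circleMap_mem_sphere' c r θ)) ⟨θ, Ioc_subset_Icc_self hθ, hlt⟩
  rw [intervalIntegral.integral_const, sub_zero, smul_eq_mul] at hint
  rwa [Real.circleAverage, smul_eq_mul, lt_inv_mul_iff₀ Real.two_pi_pos]

lemma exists_mem_frontier_le_of_circleAverage_le (hΩ : IsClosed Ω) (hs : ContinuousOn s Ω)
    (hlim : Tendsto s (cocompact ℂ) atTop) (hz : z ∈ Ω)
    (hsup : ∀ c r, 0 < r → closedBall c r ⊆ Ω → Real.circleAverage s c r ≤ s c) :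
    ∃ w ∈ frontier Ω, s w ≤ s z := by
  obtain ⟨z₁, hz₁, hmin⟩ := hs.exists_isMinOn' hΩ hz
    ((hlim.eventually_ge_atTop (s z)).filter_mono inf_le_left)
  replace hmin : ∀ w ∈ Ω, s z₁ ≤ s w := fun w hw => hmin hw
  have hcompact : IsCompact {w ∈ Ω | s w ≤ s z₁} := by
    obtain ⟨t, ht, hts⟩ := mem_cocompact.mp (hlim.eventually_gt_atTop (s z₁))
    refine ht.of_isClosed_subset (hs.preimage_isClosed_of_isClosed hΩ isClosed_Iic) fun w hw => ?_
    by_contra hwt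
    exact (hts hwt : s z₁ < s w).not_ge hw.2
  -- At a minimiser with the largest real part `s` cannot have the super-mean value property.
  obtain ⟨w, hw, hmax⟩ := hcompact.exists_isMaxOn ⟨z₁, hz₁, le_rfl⟩
    Complex.continuous_re.continuousOn
  refine ⟨w, hΩ.frontier_eq ▸ ⟨hw.1, fun hint => ?_⟩, hw.2.trans (hmin z hz)⟩
  obtain ⟨r, hr, hball⟩ := nhds_basis_closedBall.mem_iff.mp (mem_interior_iff_mem_nhds.mp hint)
  have hsphere : sphere w |r| ⊆ Ω := by
    rw [abs_of_pos hr]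
    exact sphere_subset_closedBall.trans hball
  have hmem : w + r ∈ sphere w |r| := by simp
  refine (lt_circleAverage (hs.mono hsphere) (fun u hu => hmin u (hsphere hu)) hmem ?_).not_ge
    ((hsup w r hr hball).trans hw.2)
  by_contra! hle
  have hre : (w + r).re ≤ w.re := hmax ⟨hsphere hmem, hle⟩
  rw [Complex.add_re, Complex.ofReal_re] at hre
  linarith

end MinimumPrinciple

section FeketePolynomials

lemma half_le_norm_of_norm_le_on_ball {f : ℂ → ℂ} {c z : ℂ} {M r : ℝ} (hr : 0 < r)
    (hf : DifferentiableOn ℂ f (ball c r)) (hfc : f c = 1) (hM : ∀ z ∈ ball c r, ‖f z‖ ≤ M)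
    (hz : ‖z - c‖ ≤ 1 / (4 * M) * r) : 1 / 2 ≤ ‖f z‖ := by
  have hM1 : 1 ≤ M := by simpa [hfc] using hM c (mem_ball_self hr)
  have hzball : z ∈ ball c r := by
    rw [mem_ball_iff_norm]
    refine hz.trans_lt (mul_lt_of_lt_one_left hr ?_)
    rw [div_lt_one (by positivity)]
    linarith
  have hmaps : MapsTo f (ball c r) (closedBall (f c) (2 * M)) := fun w hw => by
    rw [mem_closedBall_iff_norm, hfc]
    linarith [norm_sub_le (f w) 1, norm_one (α := ℂ), hM w hw]
  have hschwarz := Complex.dist_le_div_mul_dist_of_mapsTo_ball hf hmaps hzball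
  rw [hfc, dist_eq_norm, dist_eq_norm] at hschwarz
  have hclose : ‖f z - 1‖ ≤ 1 / 2 :=
    calc ‖f z - 1‖ ≤ 2 * M / r * ‖z - c‖ := hschwarz
      _ ≤ 2 * M / r * (1 / (4 * M) * r) := by gcongr
      _ = 1 / 2 := by field_simp; norm_num
  have htri := norm_sub_norm_le (1 : ℂ) (1 - f z)
  rw [norm_sub_rev 1 (f z), sub_sub_cancel, norm_one] at htri
  linarith

/-- Near a Fekete point `c` the Fekete factor is comparable to its maximum on the disk of radius
`separationRatio * localScale c`; in particular Fekete points are separated at this scale. -/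
def separationRatio (K δ γ : ℝ) : ℝ := 1 / (4 * Real.exp (oscillationBound K δ γ))

lemma separationRatio_pos (K δ γ : ℝ) : 0 < separationRatio K δ γ := by
  unfold separationRatio
  positivity

lemma oscillationBound_nonneg {K δ : ℝ} (hK : 0 ≤ K) (hδ : 0 ≤ δ) (γ : ℝ) :
    0 ≤ oscillationBound K δ γ := by
  unfold oscillationBound
  positivity

lemma separationRatio_le_one {K δ : ℝ} (hK : 0 ≤ K) (hδ : 0 ≤ δ) (γ : ℝ) :
    separationRatio K δ γ ≤ 1 := by
  rw [separationRatio, div_le_one (by positivity)]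
  linarith [Real.one_le_exp (oscillationBound_nonneg hK hδ γ)]

variable {ι : Type*} [Fintype ι] {ν : Measure ℂ} {K δ γ R : ℝ} {x : ι → ℂ}

lemma prod_erase_norm_sub_eq (ψ : ℂ → ℝ) (x : ι → ℂ) (j : ι) (z : ℂ) :
    ∏ i ∈ Finset.univ.erase j, ‖z - x i‖ = feketeFactor ψ x j z * Real.exp (ψ z) := by
  rw [feketeFactor, mul_assoc, ← Real.exp_add, neg_add_cancel, Real.exp_zero, mul_one]

lemma norm_prod_div_mul_exp_mul_feketeFactor (ψ : ℂ → ℝ) (hx : Function.Injective x) (j : ι)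
    (a z : ℂ) :
    ‖(∏ i ∈ Finset.univ.erase j, (z - x i) / (x j - x i)) * Complex.exp (-a)‖
        * feketeFactor ψ x j (x j)
      = feketeFactor ψ x j z * Real.exp (ψ z - ψ (x j) - a.re) := by
  have hne := (prod_erase_norm_sub_pos hx j).ne'
  have hexp : Real.exp (ψ z - ψ (x j) - a.re)
      = Real.exp (ψ z) * Real.exp (-ψ (x j)) * Real.exp (-a.re) := by
    rw [← Real.exp_add, ← Real.exp_add]
    ring_nf
  rw [hexp, norm_mul, norm_prod, Complex.norm_exp, Complex.neg_re]
  simp only [norm_div, Finset.prod_div_distrib]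
  unfold feketeFactor
  rw [Real.exp_neg (ψ z)]
  field_simp

lemma IsFekete.feketeFactor_self_le (h : AdmissibleCharge ν K δ γ R)
    (hx : IsFekete (logPotential ν) x) {j : ι} {z : ℂ}
    (hz : ‖z - x j‖ ≤ separationRatio K δ γ * localScale δ γ (x j)) :
    feketeFactor (logPotential ν) x j (x j)
      ≤ 2 * Real.exp (oscillationBound K δ γ) * feketeFactor (logPotential ν) x j z := by
  set ψ := logPotential ν
  set B := oscillationBound K δ γ
  set r := localScale δ γ (x j)
  set H := farHolomorphicPotential ν (x j) r
  set f : ℂ → ℂ := fun z =>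
    (∏ i ∈ Finset.univ.erase j, (z - x i) / (x j - x i)) * Complex.exp (-H z) with hf
  have hr0 : 0 < r := localScale_pos δ γ (x j)
  have hfactor := hx.feketeFactor_pos j
  have hnorm (w : ℂ) := norm_prod_div_mul_exp_mul_feketeFactor ψ hx.injective j (H w) w
  have hosc (w : ℂ) (hw : w ∈ ball (x j) r) : Real.exp (ψ w - ψ (x j) - (H w).re) ≤ Real.exp B :=
    Real.exp_le_exp.mpr (abs_le.mp (h.abs_logPotential_sub_sub_re_le hw)).2
  have hdiff : DifferentiableOn ℂ f (ball (x j) r) :=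
    (Differentiable.differentiableOn (by fun_prop)).mul
      (h.differentiableOn_farHolomorphicPotential (x j) r).neg.cexp
  have hcentre : f (x j) = 1 := by
    have hone : ∏ i ∈ Finset.univ.erase j, (x j - x i) / (x j - x i) = 1 :=
      Finset.prod_eq_one fun i hi => div_self <| sub_ne_zero.mpr fun h =>
        Finset.ne_of_mem_erase hi (hx.injective h).symm
    have hH : H (x j) = 0 := farHolomorphicPotential_self ν hr0
    simp only [hf, hone, hH, neg_zero, Complex.exp_zero, one_mul]
  have hbound (w : ℂ) (hw : w ∈ ball (x j) r) : ‖f w‖ ≤ Real.exp B := by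
    refine le_of_mul_le_mul_right ((hnorm w).le.trans ?_) hfactor
    rw [mul_comm]
    exact mul_le_mul (hosc w hw) (hx.feketeFactor_le j w) (feketeFactor_nonneg ..)
      (Real.exp_pos B).le
  have hhalf := half_le_norm_of_norm_le_on_ball hr0 hdiff hcentre hbound hz
  have hzball : z ∈ ball (x j) r := by
    rw [mem_ball_iff_norm]
    refine hz.trans_lt (mul_lt_of_lt_one_left hr0 ?_)
    rw [separationRatio, div_lt_one (by positivity)]
    linarith [Real.one_le_exp (oscillationBound_nonneg h.K_nonneg h.δ_pos.le γ)]
  have hmul : 1 / 2 * feketeFactor ψ x j (x j) ≤ feketeFactor ψ x j z * Real.exp B :=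
    calc _ ≤ ‖f z‖ * feketeFactor ψ x j (x j) := by gcongr
      _ = _ := hnorm z
      _ ≤ _ := mul_le_mul_of_nonneg_left (hosc z hzball) (feketeFactor_nonneg ..)
  linarith

lemma tendsto_one_add_norm_cocompact_atTop {E : Type*} [NormedAddCommGroup E] [ProperSpace E] :
    Tendsto (fun z : E => 1 + ‖z‖) (cocompact E) atTop :=
  tendsto_atTop_add_const_left _ _ (tendsto_norm_cocompact_atTop)

lemma AdmissibleCharge.tendsto_one_add_norm_pow_mul_exp_neg (h : AdmissibleCharge ν K δ γ R)
    {n : ℕ} (hn : n < ν.real univ) :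
    Tendsto (fun z => (1 + ‖z‖) ^ n * Real.exp (-logPotential ν z)) (cocompact ℂ) (𝓝 0) := by
  set T := ν.real univ
  have hlim : Tendsto (fun z : ℂ => (4 : ℝ) ^ T * (1 + ‖z‖) ^ (-(T - n))) (cocompact ℂ) (𝓝 0) := by
    simpa using ((tendsto_rpow_neg_atTop (sub_pos.mpr hn)).comp
      tendsto_one_add_norm_cocompact_atTop).const_mul ((4 : ℝ) ^ T)
  refine squeeze_zero' (.of_forall fun z => by positivity) ?_ hlim
  filter_upwards [tendsto_norm_cocompact_atTop.eventually_ge_atTop (2 * R + 1)] with z hz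
  have hR := h.one_le_R
  have hpos : 0 < 1 + ‖z‖ := by positivity
  have hlog : T * (Real.log (1 + ‖z‖) - Real.log 4) ≤ logPotential ν z := by
    rw [← Real.log_div hpos.ne' (by norm_num)]
    refine le_trans ?_ (h.le_logPotential (by linarith : R < ‖z‖))
    gcongr
    linarith
  calc (1 + ‖z‖) ^ n * Real.exp (-logPotential ν z)
      ≤ (1 + ‖z‖) ^ n * Real.exp (Real.log 4 * T + Real.log (1 + ‖z‖) * (-T)) := by
        gcongr; linarith
    _ = (4 : ℝ) ^ T * (1 + ‖z‖) ^ (-(T - n)) := by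
        rw [Real.exp_add, ← Real.rpow_def_of_pos hpos, ← Real.rpow_def_of_pos (by norm_num),
          mul_left_comm, ← Real.rpow_natCast, ← Real.rpow_add hpos]
        ring_nf

end FeketePolynomials

lemma exists_differentiable_norm_le_of_prod_norm_sub_le {ι : Type*} {x : ι → ℂ} {p : ℂ}
    {s : Finset ι} {g : ℂ → ℝ}
    (hp : 0 < ∏ i ∈ s, ‖p - x i‖)
    (hg : ∀ z, ∏ i ∈ s, ‖z - x i‖ ≤ g z * ∏ i ∈ s, ‖p - x i‖) :
    ∃ P : ℂ → ℂ, Differentiable ℂ P ∧ P p = 1 ∧ ∀ z, ‖P z‖ ≤ g z := by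
  refine ⟨fun z => (∏ i ∈ s, (z - x i)) / ∏ i ∈ s, (p - x i), by fun_prop, div_self ?_,
    fun z => ?_⟩
  · rw [← norm_pos_iff, norm_prod]
    exact hp
  · rw [norm_div, norm_prod, norm_prod, div_le_iff₀ hp]
    exact hg z

section ExcessPotential

variable {ι : Type*} [Fintype ι] {τ σ ν : Measure ℂ} {K δ γ R r A b M : ℝ} {x : ι → ℂ} {c p z : ℂ}

/-- The logarithmic potential of the charge `∑ i, δ_{x i} - τ`. -/
def excessPotential (τ : Measure ℂ) (x : ι → ℂ) (z : ℂ) : ℝ :=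
  ∑ i, Real.log ‖z - x i‖ - logPotential τ z

lemma exp_excessPotential (τ : Measure ℂ) (hz : ∀ i, z ≠ x i) :
    Real.exp (excessPotential τ x z) = (∏ i, ‖z - x i‖) * Real.exp (-logPotential τ z) := by
  rw [excessPotential, sub_eq_add_neg, Real.exp_add, Real.exp_sum]
  congr 1
  exact Finset.prod_congr rfl fun i _ => Real.exp_log (norm_sub_pos_iff.mpr (hz i))

lemma harmonicAt_sum_log_norm_sub (hz : ∀ i, z ≠ x i) :
    InnerProductSpace.HarmonicAt (fun z => ∑ i, Real.log ‖z - x i‖) z := by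
  have hprod : InnerProductSpace.HarmonicAt (fun w => Real.log ‖∏ i, (w - x i)‖) z :=
    AnalyticAt.harmonicAt_log_norm (by fun_prop)
      (Finset.prod_ne_zero_iff.mpr fun i _ => sub_ne_zero.mpr (hz i))
  refine (InnerProductSpace.harmonicAt_congr_nhds ?_).mpr hprod
  filter_upwards [eventually_all.mpr fun i => eventually_ne_nhds (hz i)] with w hw
  rw [norm_prod, Real.log_prod fun i _ => (norm_sub_pos_iff.mpr (hw i)).ne']

namespace AdmissibleCharge

lemma continuousOn_excessPotential (h : AdmissibleCharge τ K δ γ R) {Ω : Set ℂ}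
    (hΩ : ∀ z ∈ Ω, ∀ i, z ≠ x i) : ContinuousOn (excessPotential τ x) Ω :=
  ContinuousOn.sub (continuousOn_finsetSum _ fun i _ =>
    ContinuousOn.log (by fun_prop) fun z hz => (norm_sub_pos_iff.mpr (hΩ z hz i)).ne')
    h.continuous_logPotential.continuousOn

lemma circleAverage_excessPotential_le (h : AdmissibleCharge τ K δ γ R) (hr : 0 < r)
    (hx : ∀ z ∈ closedBall c r, ∀ i, z ≠ x i) :
    Real.circleAverage (excessPotential τ x) c r ≤ excessPotential τ x c := by
  rw [← abs_of_pos hr] at hx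
  have hharm : InnerProductSpace.HarmonicOnNhd (fun z => ∑ i, Real.log ‖z - x i‖)
      (closedBall c |r|) := fun z hz => harmonicAt_sum_log_norm_sub (hx z hz)
  have hcont : ContinuousOn (fun z => ∑ i, Real.log ‖z - x i‖) (sphere c |r|) := fun z hz =>
    (hharm z (sphere_subset_closedBall hz)).1.continuousAt.continuousWithinAt
  have hsplit := Real.circleAverage_sub hcont.circleIntegrable'
    (h.continuous_logPotential.continuousOn (s := sphere c |r|)).circleIntegrable'
  rw [hharm.circleAverage_eq] at hsplit
  exact hsplit.trans_le (sub_le_sub_left (h.logPotential_le_circleAverage c hr) _)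

lemma tendsto_excessPotential (h : AdmissibleCharge τ K δ γ R)
    (hcard : τ.real univ < Fintype.card ι) (x : ι → ℂ) :
    Tendsto (excessPotential τ x) (cocompact ℂ) atTop := by
  set T := τ.real univ
  set N : ℝ := (Fintype.card ι : ℝ)
  have hR := h.one_le_R
  have hlim : Tendsto (fun z : ℂ => (N - T) * Real.log (1 + ‖z‖)
      - (N * Real.log 4 + T * Real.log (1 + R))) (cocompact ℂ) atTop :=
    tendsto_atTop_add_const_right _ _ ((Real.tendsto_log_atTop.comp
      tendsto_one_add_norm_cocompact_atTop).const_mul_atTop (sub_pos.mpr hcard))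
  refine tendsto_atTop_mono' _ ?_ hlim
  filter_upwards [tendsto_norm_cocompact_atTop.eventually_ge_atTop (2 * ‖x‖ + 1)] with z hz
  have hupper : logPotential τ z ≤ T * (Real.log (1 + ‖z‖) + Real.log (1 + R)) := by
    refine (h.logPotential_le z).trans (mul_le_mul_of_nonneg_left ?_ measureReal_nonneg)
    rw [← Real.log_mul (by positivity) (by positivity)]
    exact Real.log_le_log (by positivity) (by nlinarith [norm_nonneg z])
  have hlower : N * (Real.log (1 + ‖z‖) - Real.log 4) ≤ ∑ i, Real.log ‖z - x i‖ := by
    rw [← nsmul_eq_mul]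
    refine Finset.card_nsmul_le_sum _ _ _ fun i _ => ?_
    rw [← Real.log_div (by positivity) (by norm_num)]
    exact Real.log_le_log (by positivity)
      (by linarith [norm_sub_norm_le z (x i), norm_le_pi_norm x i, norm_nonneg x])
  unfold excessPotential
  linarith

lemma exists_norm_sub_eq_excessPotential_le (h : AdmissibleCharge τ K δ γ R)
    (hcard : τ.real univ < Fintype.card ι) {s : ι → ℝ} (hs : ∀ i, 0 < s i)
    (hp : ∀ i, s i ≤ ‖p - x i‖) :
    ∃ k z, ‖z - x k‖ = s k ∧ (∀ i, s i ≤ ‖z - x i‖) ∧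
      excessPotential τ x z ≤ excessPotential τ x p := by
  set Ω : Set ℂ := {z | ∀ i, s i ≤ ‖z - x i‖}
  have hΩ : IsClosed Ω := by
    simp only [Ω, ofPred_forall]
    exact isClosed_iInter fun i => isClosed_le (by fun_prop) (by fun_prop)
  have hne : ∀ z ∈ Ω, ∀ i, z ≠ x i := fun z hz i =>
    norm_sub_pos_iff.mp ((hs i).trans_le (hz i))
  obtain ⟨z, hz, hle⟩ := exists_mem_frontier_le_of_circleAverage_le hΩ
    (h.continuousOn_excessPotential hne) (h.tendsto_excessPotential hcard x) hp
    fun c r hr hball => h.circleAverage_excessPotential_le hr fun w hw => hne w (hball hw)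
  rw [hΩ.frontier_eq] at hz
  obtain ⟨k, hk⟩ : ∃ k, ‖z - x k‖ = s k := by
    by_contra! hcon
    refine hz.2 (mem_interior_iff_mem_nhds.mpr ?_)
    have hnear (i : ι) : ∀ᶠ w in 𝓝 z, s i < ‖w - x i‖ :=
      (show Continuous fun w => ‖w - x i‖ by fun_prop).continuousAt.eventually
        (lt_mem_nhds ((hz.1 i).lt_of_ne' (hcon i)))
    filter_upwards [eventually_all.mpr hnear] with w hw using fun i => (hw i).le
  exact ⟨k, z, hk, hz.1, hle⟩

end AdmissibleCharge

lemma IsFekete.exists_differentiable_norm_le (h : AdmissibleCharge ν K δ γ R)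
    (hx : IsFekete (logPotential ν) x) {j : ι}
    (hp : ‖p - x j‖ ≤ separationRatio K δ γ * localScale δ γ (x j)) :
    ∃ P : ℂ → ℂ, Differentiable ℂ P ∧ P p = 1 ∧ ∀ z, ‖P z‖ ≤
      2 * Real.exp (oscillationBound K δ γ)
        * Real.exp (logPotential ν z - logPotential ν p) := by
  set ψ := logPotential ν
  have hself := hx.feketeFactor_self_le h hp
  have hpos : 0 < feketeFactor ψ x j p :=
    pos_of_mul_pos_right ((hx.feketeFactor_pos j).trans_le hself) (by positivity)
  refine exists_differentiable_norm_le_of_prod_norm_sub_le (x := x) (s := Finset.univ.erase j)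
    ?_ fun z => ?_
  · rw [prod_erase_norm_sub_eq ψ]
    positivity
  · rw [prod_erase_norm_sub_eq ψ, prod_erase_norm_sub_eq ψ]
    calc feketeFactor ψ x j z * Real.exp (ψ z)
        ≤ 2 * Real.exp (oscillationBound K δ γ) * feketeFactor ψ x j p * Real.exp (ψ z) := by
          gcongr
          exact (hx.feketeFactor_le j z).trans hself
      _ = _ := by
          rw [Real.exp_sub]
          field_simp

lemma IsFekete.exists_mul_exp_le_prod_norm_sub (h : AdmissibleCharge (τ + σ) K δ γ R)
    (hx : IsFekete (logPotential (τ + σ)) x) (hcard : τ.real univ < Fintype.card ι)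
    (hp : ∀ i, separationRatio K δ γ * localScale δ γ (x i) ≤ ‖p - x i‖) :
    ∃ k z, ‖z - x k‖ = separationRatio K δ γ * localScale δ γ (x k) ∧
      separationRatio K δ γ * localScale δ γ (x k) * feketeFactor (logPotential (τ + σ)) x k (x k)
          * Real.exp (logPotential σ z + logPotential τ p)
        ≤ 2 * Real.exp (oscillationBound K δ γ) * ∏ i, ‖p - x i‖ := by
  set ψ := logPotential (τ + σ)
  set s : ι → ℝ := fun i => separationRatio K δ γ * localScale δ γ (x i)
  have hs (i : ι) : 0 < s i := mul_pos (separationRatio_pos K δ γ) (localScale_pos δ γ (x i))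
  have hτ := h.mono_measure (Measure.le_add_right le_rfl)
  obtain ⟨k, z, hk, hz, hle⟩ := hτ.exists_norm_sub_eq_excessPotential_le hcard hs hp
  refine ⟨k, z, hk, ?_⟩
  have hne {w : ℂ} (hw : ∀ i, s i ≤ ‖w - x i‖) (i : ι) : w ≠ x i :=
    norm_sub_pos_iff.mp ((hs i).trans_le (hw i))
  have hprod : ∏ i, ‖z - x i‖
      = s k * (feketeFactor ψ x k z * Real.exp (logPotential τ z + logPotential σ z)) := by
    rw [← h.logPotential_add, ← prod_erase_norm_sub_eq, ← hk,
      Finset.mul_prod_erase _ (fun i => ‖z - x i‖) (Finset.mem_univ k)]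
  have hexp := Real.exp_le_exp.mpr hle
  rw [exp_excessPotential τ (hne hz), exp_excessPotential τ (hne hp), hprod] at hexp
  calc s k * feketeFactor ψ x k (x k) * Real.exp (logPotential σ z + logPotential τ p)
      ≤ s k * (2 * Real.exp (oscillationBound K δ γ) * feketeFactor ψ x k z)
          * Real.exp (logPotential σ z + logPotential τ p) := by
        have := (hs k).le
        gcongr
        exact hx.feketeFactor_self_le h hk.le
    _ = 2 * Real.exp (oscillationBound K δ γ) * (s k * (feketeFactor ψ x k z
          * Real.exp (logPotential τ z + logPotential σ z)) * Real.exp (-logPotential τ z))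
          * Real.exp (logPotential τ p) := by
        simp only [Real.exp_add, Real.exp_neg]
        field_simp
    _ ≤ 2 * Real.exp (oscillationBound K δ γ) * ((∏ i, ‖p - x i‖)
          * Real.exp (-logPotential τ p)) * Real.exp (logPotential τ p) := by gcongr
    _ = _ := by
        rw [Real.exp_neg]
        field_simp

lemma one_add_norm_le_localScale_mul (hδ : 0 < δ) (hγ : 0 ≤ γ)
    (hz : ‖z - c‖ ≤ localScale δ γ c) :
    1 + ‖c‖ ≤ 2 ^ (1 + γ / δ) * localScale δ γ c * (1 + ‖z‖) ^ (1 + γ / δ) := by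
  have hc : 1 + ‖c‖ ≤ 2 * (1 + ‖z‖) := by
    have htri := norm_sub_norm_le c z
    rw [norm_sub_rev] at htri
    linarith [norm_nonneg z, localScale_le_one hδ hγ c]
  have hscale := (localScale_pos δ γ c).le
  calc 1 + ‖c‖ = (1 + ‖c‖) ^ (1 + γ / δ) * localScale δ γ c := by
        rw [localScale, ← Real.rpow_add (by positivity), add_neg_cancel_right, Real.rpow_one]
    _ ≤ (2 * (1 + ‖z‖)) ^ (1 + γ / δ) * localScale δ γ c := by gcongr
    _ = _ := by
        rw [Real.mul_rpow (by norm_num) (by positivity)]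
        ring

/-- The constant in the bound for the normalised Fekete polynomial, up to the growth constant of the
potential that is split off. -/
def feketePeakConst (K δ γ : ℝ) : ℝ :=
  2 * Real.exp (oscillationBound K δ γ) / separationRatio K δ γ * 2 ^ (1 + γ / δ)

lemma feketePeakConst_pos (K δ γ : ℝ) : 0 < feketePeakConst K δ γ := by
  have := separationRatio_pos K δ γ
  unfold feketePeakConst
  positivity

lemma le_feketePeakConst (hK : 0 ≤ K) (hδ : 0 ≤ δ) (hγ : 0 ≤ γ) :
    2 * Real.exp (oscillationBound K δ γ) ≤ feketePeakConst K δ γ := by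
  have hsep := one_le_one_div (separationRatio_pos K δ γ) (separationRatio_le_one hK hδ γ)
  have htwo : (1 : ℝ) ≤ 2 ^ (1 + γ / δ) := Real.one_le_rpow (by norm_num) (by positivity)
  calc 2 * Real.exp (oscillationBound K δ γ)
      ≤ 2 * Real.exp (oscillationBound K δ γ) * (1 / separationRatio K δ γ * 2 ^ (1 + γ / δ)) :=
        le_mul_of_one_le_right (by positivity) (one_le_mul_of_one_le_of_one_le hsep htwo)
    _ = feketePeakConst K δ γ := by unfold feketePeakConst; ring

lemma IsFekete.exists_peak_of_forall_le (h : AdmissibleCharge (τ + σ) K δ γ R)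
    (hx : IsFekete (logPotential (τ + σ)) x) (hcard : τ.real univ < Fintype.card ι)
    (hgrow : ∀ z, (1 + ‖z‖) ^ (1 + γ / δ) ≤ A * Real.exp (logPotential σ z - logPotential σ p))
    (hp : ∀ i, separationRatio K δ γ * localScale δ γ (x i) ≤ ‖p - x i‖) :
    ∃ P : ℂ → ℂ, Differentiable ℂ P ∧ P p = 1 ∧ ∀ z, ‖P z‖ ≤ feketePeakConst K δ γ * A * (1 + ‖z‖)
      * Real.exp (logPotential (τ + σ) z - logPotential (τ + σ) p) := by
  set ψ := logPotential (τ + σ) with hψ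
  have hd := separationRatio_pos K δ γ
  obtain ⟨k, w, hk, hw⟩ := hx.exists_mul_exp_le_prod_norm_sub h hcard hp
  have hscale := localScale_pos δ γ (x k)
  have := hx.feketeFactor_pos k
  have hpos : 0 < ∏ i, ‖p - x i‖ := Finset.prod_pos fun i _ =>
    (mul_pos hd (localScale_pos δ γ (x i))).trans_le (hp i)
  have hxk : 1 + ‖x k‖ ≤ 2 ^ (1 + γ / δ) * localScale δ γ (x k)
      * (A * Real.exp (logPotential σ w - logPotential σ p)) :=
    (one_add_norm_le_localScale_mul h.δ_pos h.γ_nonneg (hk.le.trans (mul_le_of_le_one_left hscale.le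
      (separationRatio_le_one h.K_nonneg h.δ_pos.le γ)))).trans (by gcongr; exact hgrow w)
  have hA : 0 ≤ A := nonneg_of_mul_nonneg_left
    ((Real.rpow_nonneg (by positivity) _).trans (hgrow w)) (Real.exp_pos _)
  refine exists_differentiable_norm_le_of_prod_norm_sub_le (s := Finset.univ) hpos fun z => ?_
  calc ∏ i, ‖z - x i‖ = ‖z - x k‖ * (feketeFactor ψ x k z * Real.exp (ψ z)) := by
        rw [← prod_erase_norm_sub_eq,
          Finset.mul_prod_erase _ (fun i => ‖z - x i‖) (Finset.mem_univ k)]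
    _ ≤ (1 + ‖z‖) * (2 ^ (1 + γ / δ) * localScale δ γ (x k)
          * (A * Real.exp (logPotential σ w - logPotential σ p)))
          * (feketeFactor ψ x k (x k) * Real.exp (ψ z)) := by
        have := feketeFactor_nonneg ψ x k z
        gcongr
        · exact (norm_sub_le_one_add_mul_one_add z (x k)).trans (by gcongr)
        · exact hx.feketeFactor_le k z
    _ = 2 ^ (1 + γ / δ) / separationRatio K δ γ * A * (1 + ‖z‖) * Real.exp (ψ z - ψ p)
          * (separationRatio K δ γ * localScale δ γ (x k) * feketeFactor ψ x k (x k)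
          * Real.exp (logPotential σ w + logPotential τ p)) := by
        rw [hψ, h.logPotential_add p]
        simp only [Real.exp_add, Real.exp_sub]
        field_simp
    _ ≤ 2 ^ (1 + γ / δ) / separationRatio K δ γ * A * (1 + ‖z‖) * Real.exp (ψ z - ψ p)
          * (2 * Real.exp (oscillationBound K δ γ) * ∏ i, ‖p - x i‖) := by gcongr
    _ = _ := by unfold feketePeakConst; ring

lemma AdmissibleCharge.exists_peak (h : AdmissibleCharge (τ + σ) K δ γ R) (hσ : 0 < σ.real univ)
    (hgrow : ∀ z, (1 + ‖z‖) ^ (1 + γ / δ) ≤ A * Real.exp (logPotential σ z - logPotential σ p)) :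
    ∃ P : ℂ → ℂ, Differentiable ℂ P ∧ P p = 1 ∧ ∀ z, ‖P z‖ ≤ feketePeakConst K δ γ * A * (1 + ‖z‖)
      * Real.exp (logPotential (τ + σ) z - logPotential (τ + σ) p) := by
  have := (h.mono_measure (Measure.le_add_right (ν := τ) le_rfl)).isFiniteMeasure
  have := (h.mono_measure (Measure.le_add_left (ν := σ) le_rfl)).isFiniteMeasure
  set T := (τ + σ).real univ with hT
  have hτT : τ.real univ < T := by
    rw [hT, measureReal_add_apply]
    linarith
  have hT0 : 0 < T := measureReal_nonneg.trans_lt hτT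
  obtain ⟨x, hx⟩ : ∃ x : Fin ⌈T⌉₊ → ℂ, IsFekete (logPotential (τ + σ)) x := by
    refine exists_isFekete h.continuous_logPotential (h.tendsto_one_add_norm_pow_mul_exp_neg ?_)
    rw [Fintype.card_fin, Nat.cast_sub (Nat.one_le_ceil_iff.mpr hT0), Nat.cast_one,
      sub_lt_iff_lt_add]
    exact Nat.ceil_lt_add_one hT0.le
  by_cases hp : ∀ i, separationRatio K δ γ * localScale δ γ (x i) ≤ ‖p - x i‖
  · refine hx.exists_peak_of_forall_le h ?_ hgrow hp
    rw [Fintype.card_fin]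
    exact hτT.trans_le (Nat.le_ceil T)
  · push Not at hp
    obtain ⟨j, hj⟩ := hp
    obtain ⟨P, hP, hPp, hPle⟩ := hx.exists_differentiable_norm_le h hj.le
    refine ⟨P, hP, hPp, fun z => (hPle z).trans ?_⟩
    have hA : 1 ≤ A := by
      have := hgrow p
      rw [sub_self, Real.exp_zero, mul_one] at this
      exact (Real.one_le_rpow (by linarith [norm_nonneg p])
        (by have := h.δ_pos; have := h.γ_nonneg; positivity)).trans this
    have hC := le_feketePeakConst h.K_nonneg h.δ_pos.le h.γ_nonneg
    rw [mul_assoc (feketePeakConst K δ γ)]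
    refine mul_le_mul_of_nonneg_right ?_ (Real.exp_pos _).le
    exact hC.trans (le_mul_of_one_le_right (feketePeakConst_pos K δ γ).le
      (one_le_mul_of_one_le_of_one_le hA (le_add_of_nonneg_right (norm_nonneg z))))

lemma AdmissibleCharge.exists_decaying_peak (h : AdmissibleCharge (τ + σ + σ) K δ γ R)
    (hσ : 0 < σ.real univ) (hb : 1 + γ / δ ≤ b)
    (hgrow : ∀ z, (1 + ‖z‖) ^ b ≤ A * Real.exp (logPotential σ z - logPotential σ p)) :
    ∃ P : ℂ → ℂ, Differentiable ℂ P ∧ P p = 1 ∧ ∀ z, ‖P z‖ ≤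
      feketePeakConst K δ γ * A ^ 2 * (1 + ‖z‖) ^ (1 - b)
        * Real.exp (logPotential (τ + σ + σ) z - logPotential (τ + σ + σ) p) := by
  have hone (z : ℂ) : 1 ≤ 1 + ‖z‖ := le_add_of_nonneg_right (norm_nonneg z)
  obtain ⟨P, hP, hPp, hPle⟩ := (h.mono_measure (Measure.le_add_right le_rfl)).exists_peak hσ
    fun z => (Real.rpow_le_rpow_of_exponent_le (hone z) hb).trans (hgrow z)
  refine ⟨P, hP, hPp, fun z => (hPle z).trans ?_⟩
  have hA : 0 ≤ A := nonneg_of_mul_nonneg_left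
    ((Real.rpow_nonneg (by positivity) b).trans (hgrow z)) (Real.exp_pos _)
  have hC := (feketePeakConst_pos K δ γ).le
  rw [h.logPotential_add, h.logPotential_add]
  set u := logPotential (τ + σ)
  set v := logPotential σ
  calc feketePeakConst K δ γ * A * (1 + ‖z‖) * Real.exp (u z - u p)
      = feketePeakConst K δ γ * A * ((1 + ‖z‖) ^ (1 - b) * (1 + ‖z‖) ^ b)
          * Real.exp (u z - u p) := by
        rw [← Real.rpow_add (by positivity), sub_add_cancel, Real.rpow_one]
    _ ≤ feketePeakConst K δ γ * A * ((1 + ‖z‖) ^ (1 - b) * (A * Real.exp (v z - v p)))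
          * Real.exp (u z - u p) := by
        gcongr
        exact hgrow z
    _ = feketePeakConst K δ γ * A ^ 2 * (1 + ‖z‖) ^ (1 - b)
          * (Real.exp (u z - u p) * Real.exp (v z - v p)) := by ring
    _ = _ := by rw [← Real.exp_add]; ring_nf

end ExcessPotential

section LogPotentialGrowth

lemma log_one_add_norm_le {E : Type*} [NormedAddCommGroup E] {R : ℝ} {z w : E} (hR : 1 ≤ R)
    (hw : w ∈ ball 0 R) :
    Real.log (1 + ‖z‖) ≤ Real.log (2 + R)
      + (ball z 1).indicator (fun w => Real.log (1 / ‖z - w‖)) w + Real.log ‖z - w‖ := by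
  rw [mem_ball_zero_iff] at hw
  have htri := norm_sub_norm_le z w
  by_cases hzw : w ∈ ball z 1
  · rw [indicator_of_mem hzw, one_div, Real.log_inv, neg_add_cancel_right]
    rw [mem_ball_iff_norm'] at hzw
    exact Real.log_le_log (by positivity) (by linarith)
  · rw [indicator_of_notMem hzw, add_zero]
    rw [mem_ball_iff_norm', not_lt] at hzw
    rw [← Real.log_mul (by positivity) (by positivity)]
    exact Real.log_le_log (by positivity) (by nlinarith)

namespace AdmissibleCharge

variable {E : Type*} [NormedAddCommGroup E] [MeasurableSpace E] [BorelSpace E] {ν : Measure E}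
  {K δ γ R : ℝ}

lemma setIntegral_log_inv_norm_sub_le (h : AdmissibleCharge ν K δ γ R) (z : E) :
    ∫ w in ball z 1, Real.log (1 / ‖z - w‖) ∂ν ≤ K * (2 + R) ^ γ / δ := by
  have hK := h.K_nonneg
  have hδ := h.δ_pos
  have hR := h.one_le_R
  by_cases hz : ‖z‖ ≤ R + 1
  · calc ∫ w in ball z 1, Real.log (1 / ‖z - w‖) ∂ν ≤ K * (1 + ‖z‖) ^ γ * 1 ^ δ / δ :=
          h.setIntegral_log_div_le hK hδ z one_pos le_rfl
      _ ≤ K * (2 + R) ^ γ / δ := by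
          rw [Real.one_rpow, mul_one]
          have := h.γ_nonneg
          gcongr K * ?_ ^ γ / δ
          linarith
  · have hnull : ν (ball z 1) = 0 := by
      refine measure_mono_null (fun w hw => ?_) (ae_iff.mp h.ae_mem_ball)
      rw [mem_ball_iff_norm'] at hw
      simp only [mem_ofPred_eq, mem_ball_zero_iff, not_lt]
      linarith [norm_sub_norm_le z w]
    rw [setIntegral_measure_zero _ hnull]
    positivity

lemma mul_log_sub_le_logPotential (h : AdmissibleCharge ν K δ γ R) (z : E) :
    ν.real univ * (Real.log (1 + ‖z‖) - Real.log (2 + R)) - K * (2 + R) ^ γ / δ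
      ≤ logPotential ν z := by
  have := h.isFiniteMeasure
  have hnear : Integrable ((ball z 1).indicator fun w => Real.log (1 / ‖z - w‖)) ν :=
    (integrable_indicator_iff measurableSet_ball).mpr
      (h.integrableOn_log_div h.δ_pos z one_pos le_rfl)
  have hle : ∫ w, (Real.log (1 + ‖z‖) - Real.log (2 + R)
      - (ball z 1).indicator (fun w => Real.log (1 / ‖z - w‖)) w) ∂ν ≤ logPotential ν z := by
    refine integral_mono_ae ((integrable_const _).sub hnear) (h.integrable_log z) ?_
    filter_upwards [h.ae_mem_ball] with w hw
    linarith [log_one_add_norm_le (z := z) h.one_le_R hw]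
  rw [integral_sub (integrable_const _) hnear, integral_indicator measurableSet_ball,
    integral_const, smul_eq_mul] at hle
  linarith [h.setIntegral_log_inv_norm_sub_le z]

end AdmissibleCharge

lemma exists_forall_rpow_le_mul_exp_logPotential {E : Type*} [NormedAddCommGroup E]
    [MeasurableSpace E] [BorelSpace E] (K δ γ R A b : ℝ) :
    ∃ C : ℝ, 0 < C ∧ ∀ ν : Measure E, AdmissibleCharge ν K δ γ R → b ≤ ν.real univ →
      ν.real univ ≤ A → ∀ z,
        (1 + ‖z‖) ^ b ≤ C * Real.exp (logPotential ν z - logPotential ν 0) := by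
  refine ⟨Real.exp (A * Real.log (2 + R) + K * (2 + R) ^ γ / δ + A * Real.log R), Real.exp_pos _,
    fun ν h hb hA z => ?_⟩
  have hz : (0 : ℝ) ≤ Real.log (1 + ‖z‖) := Real.log_nonneg (by linarith [norm_nonneg z])
  have hR := Real.log_nonneg h.one_le_R
  have hR2 : 0 ≤ Real.log (2 + R) := Real.log_nonneg (by linarith [h.one_le_R])
  have hlower := h.mul_log_sub_le_logPotential z
  have hupper := h.logPotential_le 0
  rw [norm_zero, zero_add] at hupper
  rw [Real.rpow_def_of_pos (by positivity), ← Real.exp_add, Real.exp_le_exp]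
  linarith [mul_le_mul_of_nonneg_right hb hz, mul_le_mul_of_nonneg_right hA hR,
    mul_le_mul_of_nonneg_right hA hR2]

end LogPotentialGrowth

section DoublingPeak

variable {μ : Measure ℂ} {D : ℝ≥0} {K δ γ R c : ℝ}

lemma AdmissibleCharge.of_rieszBounded (h : RieszBounded μ K δ γ) (hfin : μ (ball 0 R) ≠ ∞)
    (hK : 0 ≤ K) (hδ : 0 < δ) (hγ : 0 ≤ γ) (hR : 1 ≤ R) (hc : 0 ≤ c) :
    AdmissibleCharge (ENNReal.ofReal c • μ.restrict (ball 0 R)) (c * K) δ γ R where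
  toRieszBounded := (h.mono Measure.restrict_le_self).smul hc
  isFiniteMeasure := by
    have : IsFiniteMeasure (μ.restrict (ball 0 R)) := isFiniteMeasure_restrict.mpr hfin
    exact Measure.smul_finite _ ENNReal.ofReal_ne_top
  ae_mem_ball := Measure.ae_smul_measure (ae_restrict_mem measurableSet_ball) _
  K_nonneg := by positivity
  δ_pos := hδ
  γ_nonneg := hγ
  one_le_R := hR

lemma exists_smul_restrict_eq_add_add {α : Type*} [MeasurableSpace α] (μ : Measure α) {s t : Set α}
    (hst : s ⊆ t) (hs : MeasurableSet s) (hc : 0 ≤ c) :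
    ∃ τ, ENNReal.ofReal c • μ.restrict t = τ + ENNReal.ofReal (c / 2) • μ.restrict s
      + ENNReal.ofReal (c / 2) • μ.restrict s := by
  refine ⟨ENNReal.ofReal c • μ.restrict (t \ s), ?_⟩
  rw [add_assoc, ← add_smul, ← ENNReal.ofReal_add (by positivity) (by positivity), add_halves,
    ← smul_add]
  have hsplit := Measure.restrict_inter_add_sdiff (μ := μ) t hs
  rw [inter_eq_self_of_subset_right hst, add_comm] at hsplit
  rw [hsplit]

lemma measureReal_ofReal_smul_restrict_univ {α : Type*} [MeasurableSpace α] (μ : Measure α)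
    (s : Set α) (hc : 0 ≤ c) :
    (ENNReal.ofReal c • μ.restrict s).real univ = c * (μ s).toReal := by
  rw [measureReal_ennreal_smul_apply, ENNReal.toReal_ofReal hc, Measure.real,
    Measure.restrict_apply_univ]

lemma IsDoubling.toReal_measure_ball_le {n : ℕ} (hμ : IsDoubling μ D) (h1 : μ (ball 0 1) = 1)
    (hR : R ≤ 2 ^ n) : (μ (ball 0 R)).toReal ≤ (D : ℝ) ^ n := by
  have hle := hμ.measure_ball_two_pow_mul_le 0 one_pos n
  rw [mul_one, h1, mul_one] at hle
  simpa using ENNReal.toReal_mono (ENNReal.pow_ne_top ENNReal.coe_ne_top)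
    ((measure_mono (ball_subset_ball hR)).trans hle)

lemma exists_forall_isDoubling_peak_logPotential (hD : 1 ≤ D) (hc : 0 < c) (M : ℝ) :
    ∃ C R₀ : ℝ, 0 < C ∧ 1 ≤ R₀ ∧ ∀ μ : Measure ℂ, IsDoubling μ D → μ (ball 0 1) = 1 →
      ∀ R, R₀ ≤ R → ∃ P : ℂ → ℂ, Differentiable ℂ P ∧ P 0 = 1 ∧ ∀ z, ‖P z‖ ≤
        C * (1 + ‖z‖) ^ (-M) * Real.exp (c * (logPotential (μ.restrict (ball 0 R)) z
          - logPotential (μ.restrict (ball 0 R)) 0)) := by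
  obtain ⟨K, δ, γ, hK, hδ, hγ, hriesz⟩ := exists_forall_isDoubling_rieszBounded hD
  set b := max (M + 1) (1 + γ / δ)
  have hb : 0 < b := lt_max_of_lt_right (by positivity)
  obtain ⟨R₀, hR₀, hlarge⟩ := exists_forall_isDoubling_le_measure_ball D
    (ENNReal.ofReal_ne_top (r := 2 * b / c))
  obtain ⟨n, hn⟩ := pow_unbounded_of_one_lt R₀ (one_lt_two (α := ℝ))
  obtain ⟨A, hA, hgrow⟩ := exists_forall_rpow_le_mul_exp_logPotential (E := ℂ)
    (c / 2 * K) δ γ R₀ (c / 2 * (D : ℝ) ^ n) b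
  have hC := feketePeakConst_pos (c * K) δ γ
  refine ⟨feketePeakConst (c * K) δ γ * A ^ 2, R₀, by positivity, hR₀, fun μ hμ h1 R hR => ?_⟩
  have hfin (r : ℝ) : μ (ball 0 r) ≠ ∞ :=
    hμ.measure_ball_ne_top one_pos (h1.trans_ne ENNReal.one_ne_top) r
  set σ := ENNReal.ofReal (c / 2) • μ.restrict (ball 0 R₀)
  have hmass : σ.real univ = c / 2 * (μ (ball 0 R₀)).toReal :=
    measureReal_ofReal_smul_restrict_univ μ _ (by positivity)
  have hbσ : b ≤ σ.real univ := by
    rw [hmass, ← div_le_iff₀' (by positivity), div_div_eq_mul_div, mul_comm]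
    exact (ENNReal.ofReal_le_iff_le_toReal (hfin R₀)).mp (hlarge μ 0 hμ h1.ge)
  have hσA : σ.real univ ≤ c / 2 * (D : ℝ) ^ n :=
    hmass.trans_le (by gcongr; exact hμ.toReal_measure_ball_le h1 hn.le)
  have hadm {r a : ℝ} (hr : 1 ≤ r) (ha : 0 ≤ a) :=
    AdmissibleCharge.of_rieszBounded (hriesz μ hμ h1) (hfin r) hK.le hδ hγ hr ha
  obtain ⟨τ, hτ⟩ := exists_smul_restrict_eq_add_add μ (ball_subset_ball hR)
    (measurableSet_ball (x := (0 : ℂ))) hc.le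
  have hν := hadm (hR₀.trans hR) hc.le
  rw [hτ] at hν
  obtain ⟨P, hP, hP0, hPle⟩ := hν.exists_decaying_peak (hb.trans_le hbσ) (le_max_right _ _)
    (hgrow σ (hadm hR₀ (by positivity)) hbσ hσA)
  refine ⟨P, hP, hP0, fun z => (hPle z).trans ?_⟩
  rw [← hτ, logPotential_smul_measure hc.le, logPotential_smul_measure hc.le, ← mul_sub]
  gcongr
  · exact le_add_of_nonneg_right (norm_nonneg z)
  · linarith [le_max_left (M + 1) (1 + γ / δ)]

end DoublingPeak

section Laplacian

open scoped Convolution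

lemma lap_eq_laplacian (f : ℂ → ℝ) : lap f = Laplacian.laplacian f :=
  (InnerProductSpace.laplacian_eq_iteratedFDeriv_complexPlane f).symm

lemma lap_congr_nhds {f g : ℂ → ℝ} {z : ℂ} (h : f =ᶠ[𝓝 z] g) : lap f z = lap g z := by
  rw [lap_eq_laplacian, lap_eq_laplacian]
  exact (InnerProductSpace.laplacian_congr_nhds h).eq_of_nhds

lemma lap_eq_zero_of_harmonicAt {f : ℂ → ℝ} {z : ℂ} (h : InnerProductSpace.HarmonicAt f z) :
    lap f z = 0 := by
  rw [lap_eq_laplacian]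
  exact h.2.eq_of_nhds

lemma lap_eq_fderiv_fderiv {f : ℂ → ℝ} (hf : ContDiff ℝ 2 f) (z : ℂ) :
    lap f z = fderiv ℝ (fun y => fderiv ℝ f y 1) z 1
      + fderiv ℝ (fun y => fderiv ℝ f y Complex.I) z Complex.I := by
  have hd : DifferentiableAt ℝ (fderiv ℝ f) z :=
    (hf.fderiv_right (m := 1) le_rfl).differentiable one_ne_zero z
  rw [lap, iteratedFDeriv_two_apply, iteratedFDeriv_two_apply,
    fderiv_clm_apply hd (differentiableAt_const _), fderiv_clm_apply hd (differentiableAt_const _)]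
  simp

lemma contDiff_lap {m n : WithTop ℕ∞} {f : ℂ → ℝ} (hf : ContDiff ℝ n f) (hmn : m + 2 ≤ n) :
    ContDiff ℝ m (lap f) := by
  have hd : ContDiff ℝ m (iteratedFDeriv ℝ 2 f) := hf.iteratedFDeriv_right (mod_cast hmn)
  have happly (v : Fin 2 → ℂ) : ContDiff ℝ m fun z => iteratedFDeriv ℝ 2 f z v :=
    (ContinuousMultilinearMap.apply ℝ (fun _ => ℂ) ℝ v).contDiff.comp hd
  exact (happly _).add (happly _)

lemma lap_comp_smul_sub {f : ℂ → ℝ} (hf : ContDiff ℝ 2 f) (a : ℝ) (b z : ℂ) :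
    lap (fun w => f (a • (w - b))) z = a ^ 2 * lap f (a • (z - b)) := by
  have hcomp : iteratedFDeriv ℝ 2 (fun w => f (a • (w - b))) z
      = a ^ 2 • iteratedFDeriv ℝ 2 f (a • (z - b)) := by
    rw [iteratedFDeriv_comp_sub (f := fun w => f (a • w)), iteratedFDeriv_comp_const_smul a hf]
  simp only [lap, hcomp, smul_apply, smul_eq_mul]
  ring

lemma lap_comp_sub_left {f : ℂ → ℝ} (hf : ContDiff ℝ 2 f) (z w : ℂ) :
    lap (fun w => f (z - w)) w = lap f (z - w) := by
  simpa using lap_comp_smul_sub hf (-1) z w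

lemma lap_add_const (f : ℂ → ℝ) (c : ℝ) : lap (fun z => f z + c) = lap f := by
  have hfd : fderiv ℝ (fun z => f z + c) = fderiv ℝ f := funext fun z => fderiv_add_const c
  ext z
  simp only [lap, iteratedFDeriv_two_apply, hfd]

section Convolution

variable {m : Measure ℂ} {f g : ℂ → ℝ}

lemma hasCompactSupport_fderiv_apply (hc : HasCompactSupport g) (v : ℂ) :
    HasCompactSupport (fun y => fderiv ℝ g y v) :=
  (hc.fderiv ℝ).comp_left (g := fun T : ℂ →L[ℝ] ℝ => T v) rfl

lemma fderiv_convolution_apply (hf : LocallyIntegrable f m) (hg : ContDiff ℝ 1 g)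
    (hc : HasCompactSupport g) (z v : ℂ) :
    fderiv ℝ (f ⋆[ContinuousLinearMap.mul ℝ ℝ, m] g) z v
      = (f ⋆[ContinuousLinearMap.mul ℝ ℝ, m] fun y => fderiv ℝ g y v) z := by
  let gSnd : ℝ → ℂ → ℝ := fun _ => g
  have hgSnd (x : ℂ) : fderiv ℝ (↿gSnd) ((0 : ℝ), x)
      = (fderiv ℝ g x).comp (ContinuousLinearMap.snd ℝ ℝ ℂ) :=
    HasFDerivAt.fderiv (((hg.differentiable one_ne_zero x).hasFDerivAt).comp (f := Prod.snd)
      ((0 : ℝ), x) hasFDerivAt_snd)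
  have hderiv := (hasFDerivAt_convolution_right_with_param (ContinuousLinearMap.mul ℝ ℝ)
    (g := gSnd) isOpen_univ hc.isCompact (fun _ x _ hx => image_eq_zero_of_notMem_tsupport hx) hf
    (hg.comp contDiff_snd).contDiffOn (0, z) trivial).comp z (hasFDerivAt_prodMk_right 0 z)
  simp only [hgSnd] at hderiv
  refine (congrArg (· v) hderiv.fderiv).trans ?_
  refine (convolution_precompR_apply (ContinuousLinearMap.mul ℝ ℝ) hf
    ((hc.fderiv ℝ).comp_left (g := fun T : ℂ →L[ℝ] ℝ => T.comp (.snd ℝ ℝ ℂ)) rfl)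
    ((hg.continuous_fderiv one_ne_zero).clm_comp continuous_const) z (0, v)).trans ?_
  rfl

lemma lap_convolution (hf : LocallyIntegrable f m) (hg : ContDiff ℝ 2 g)
    (hc : HasCompactSupport g) (z : ℂ) :
    lap (f ⋆[ContinuousLinearMap.mul ℝ ℝ, m] g) z
      = (f ⋆[ContinuousLinearMap.mul ℝ ℝ, m] lap g) z := by
  have hd (v : ℂ) : ContDiff ℝ 1 fun y => fderiv ℝ g y v :=
    (hg.fderiv_right (m := 1) le_rfl).clm_apply contDiff_const
  have hdd (v : ℂ) : Continuous fun y => fderiv ℝ (fun y => fderiv ℝ g y v) y v :=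
    ((hd v).continuous_fderiv one_ne_zero).clm_apply continuous_const
  have hcc (v : ℂ) : HasCompactSupport fun y => fderiv ℝ (fun y => fderiv ℝ g y v) y v :=
    hasCompactSupport_fderiv_apply (hasCompactSupport_fderiv_apply hc v) v
  have hlap : lap g = (fun y => fderiv ℝ (fun y => fderiv ℝ g y 1) y 1)
      + fun y => fderiv ℝ (fun y => fderiv ℝ g y Complex.I) y Complex.I :=
    funext (lap_eq_fderiv_fderiv hg)
  rw [lap_eq_fderiv_fderiv (hc.contDiff_convolution_right _ hf hg), hlap,
    ConvolutionExistsAt.distrib_add ((hcc 1).convolutionExists_right _ hf (hdd 1) z)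
      ((hcc Complex.I).convolutionExists_right _ hf (hdd Complex.I) z)]
  simp only [fderiv_convolution_apply hf (hg.of_le one_le_two) hc,
    fderiv_convolution_apply hf (hd _) (hasCompactSupport_fderiv_apply hc _)]

end Convolution

section Radial

variable {g : ℝ → ℝ}

lemma hasFDerivAt_comp_norm_sq (hg : Differentiable ℝ g) (y : ℂ) :
    HasFDerivAt (fun x : ℂ => g (‖x‖ ^ 2)) (deriv g (‖y‖ ^ 2) • (2 • innerSL ℝ y)) y :=
  (hg _).hasDerivAt.comp_hasFDerivAt y (hasStrictFDerivAt_norm_sq y).hasFDerivAt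

lemma lap_comp_norm_sq (hg : ContDiff ℝ 2 g) (x : ℂ) :
    lap (fun x => g (‖x‖ ^ 2)) x
      = 4 * ‖x‖ ^ 2 * deriv (deriv g) (‖x‖ ^ 2) + 4 * deriv g (‖x‖ ^ 2) := by
  have hdg : Differentiable ℝ g := hg.differentiable two_ne_zero
  have hddg : Differentiable ℝ (deriv g) := hg.differentiable_deriv_two
  have hfirst (v y : ℂ) : fderiv ℝ (fun x : ℂ => g (‖x‖ ^ 2)) y v
      = deriv g (‖y‖ ^ 2) * (2 * inner ℝ v y) := by
    rw [(hasFDerivAt_comp_norm_sq hdg y).fderiv]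
    simp [-Complex.inner, real_inner_comm y v]
  have hsecond (v y : ℂ) : fderiv ℝ (fun y : ℂ => deriv g (‖y‖ ^ 2) * (2 * inner ℝ v y)) y v
      = deriv (deriv g) (‖y‖ ^ 2) * (2 * inner ℝ v y) ^ 2
        + 2 * deriv g (‖y‖ ^ 2) * inner ℝ v v := by
    have hinner : HasFDerivAt (fun y : ℂ => 2 * inner ℝ v y) ((2 : ℝ) • innerSL ℝ v) y :=
      (innerSL ℝ v).hasFDerivAt.const_mul 2
    have hmul := ((hasFDerivAt_comp_norm_sq hddg y).mul hinner).fderiv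
    refine (congrArg (· v) hmul).trans ?_
    simp only [add_apply, smul_apply, coe_innerSL_apply, real_inner_comm, smul_eq_mul, nsmul_eq_mul,
      Nat.cast_ofNat]
    ring
  have hnorm : ‖x‖ ^ 2 = x.re ^ 2 + x.im ^ 2 := by
    rw [← Complex.normSq_eq_norm_sq, Complex.normSq_apply]
    ring
  rw [lap_eq_fderiv_fderiv (f := fun x : ℂ => g (‖x‖ ^ 2)) (hg.comp (contDiff_norm_sq ℝ))]
  simp only [hfirst, hsecond]
  have hre : inner ℝ (1 : ℂ) x = x.re := by simp
  have him : inner ℝ Complex.I x = x.im := by simp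
  rw [hre, him, real_inner_self_eq_norm_sq, real_inner_self_eq_norm_sq, norm_one, Complex.norm_I,
    hnorm]
  ring

lemma integral_lap_comp_norm_sq {c : ℝ} (hg : ContDiff ℝ 2 g)
    (hc : ∀ s, 1 ≤ s → s * deriv g s = c) :
    ∫ x, lap (fun x => g (‖x‖ ^ 2)) x = 4 * π * c := by
  have hdg : ContDiff ℝ 1 (deriv g) := hg.deriv'
  have hderiv (r : ℝ) : HasDerivAt (fun r => 2 * (r ^ 2 * deriv g (r ^ 2)))
      (r * (4 * r ^ 2 * deriv (deriv g) (r ^ 2) + 4 * deriv g (r ^ 2))) r := by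
    have hsq : HasDerivAt (fun r : ℝ => r ^ 2) (2 * r) r := by simpa using hasDerivAt_pow 2 r
    have hcomp := (hdg.differentiable one_ne_zero (r ^ 2)).hasDerivAt.comp r hsq
    exact ((hsq.mul hcomp).const_mul 2).congr_deriv (by simp only [Function.comp_apply]; ring)
  have hzero (r : ℝ) (hr : 1 < r) :
      r * (4 * r ^ 2 * deriv (deriv g) (r ^ 2) + 4 * deriv g (r ^ 2)) = 0 := by
    refine (hderiv r).unique ((hasDerivAt_const r (2 * c)).congr_of_eventuallyEq ?_)
    filter_upwards [Ioi_mem_nhds hr] with s hs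
    rw [hc _ (one_le_pow₀ (le_of_lt hs))]
  simp_rw [lap_comp_norm_sq hg]
  rw [integral_fun_norm_addHaar volume
    (fun r => 4 * r ^ 2 * deriv (deriv g) (r ^ 2) + 4 * deriv g (r ^ 2))]
  simp only [Complex.finrank_real_complex, Nat.add_one_sub_one, pow_one, smul_eq_mul]
  rw [setIntegral_eq_of_subset_of_forall_sdiff_eq_zero measurableSet_Ioi
    (Ioc_subset_Ioi_self : Ioc (0 : ℝ) 1 ⊆ Ioi 0)
    fun r hr => hzero r (not_le.mp fun h => hr.2 ⟨hr.1, h⟩),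
    ← intervalIntegral.integral_of_le zero_le_one,
    intervalIntegral.integral_eq_sub_of_hasDerivAt (fun r _ => hderiv r)
      (Continuous.intervalIntegrable (by have := hdg.continuous_deriv_one; fun_prop) 0 1)]
  have hone : deriv g 1 = c := by simpa using hc 1 le_rfl
  simp only [Measure.real, Complex.volume_ball, ENNReal.ofReal_one, one_pow, one_mul,
    ENNReal.coe_toReal, NNReal.coe_real_pi, hone, ne_eq, OfNat.ofNat_ne_zero, not_false_eq_true,
    zero_pow, zero_mul, mul_zero, sub_zero, nsmul_eq_mul, Nat.cast_ofNat]
  ring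

end Radial

section SmoothedLogKernel

/-- A smooth function on `ℝ` that equals `log s / 2` for `s ≥ 1/2` and vanishes for `s ≤ 1/4`, so
that evaluating it at `‖x‖ ^ 2` gives a smooth truncation of `log ‖x‖`. -/
def truncatedHalfLog (s : ℝ) : ℝ := Real.smoothTransition (4 * s - 1) * (Real.log s / 2)

lemma contDiff_truncatedHalfLog {n : ℕ∞} : ContDiff ℝ n truncatedHalfLog := by
  rw [contDiff_iff_contDiffAt]
  intro s
  by_cases hs : s < 1 / 4
  · refine contDiffAt_const.congr_of_eventuallyEq (f := fun _ => 0) ?_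
    filter_upwards [Iio_mem_nhds hs] with y (hy : y < 1 / 4)
    rw [truncatedHalfLog, Real.smoothTransition.zero_of_nonpos (by linarith), zero_mul]
  · have hs0 : s ≠ 0 := by
      rintro rfl
      norm_num at hs
    exact (Real.smoothTransition.contDiff.comp (g := Real.smoothTransition)
      (f := fun s => 4 * s - 1) (by fun_prop)).contDiffAt.mul
      ((Real.contDiffAt_log.mpr hs0).div_const 2)

lemma truncatedHalfLog_eq {s : ℝ} (hs : 1 / 2 ≤ s) : truncatedHalfLog s = Real.log s / 2 := by
  rw [truncatedHalfLog, Real.smoothTransition.one_of_one_le (by linarith), one_mul]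

lemma deriv_truncatedHalfLog {s : ℝ} (hs : 1 / 2 < s) : deriv truncatedHalfLog s = s⁻¹ / 2 := by
  have heq : truncatedHalfLog =ᶠ[𝓝 s] fun s => Real.log s / 2 := by
    filter_upwards [Ioi_mem_nhds hs] with y hy using truncatedHalfLog_eq (le_of_lt hy)
  rw [heq.deriv_eq]
  exact ((Real.hasDerivAt_log (by linarith)).div_const 2).deriv

/-- The logarithmic kernel `log ‖x‖` smoothed at scale `t`. -/
def logKernel (t : ℝ) (x : ℂ) : ℝ := truncatedHalfLog (‖t⁻¹ • x‖ ^ 2) + Real.log t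

lemma contDiff_truncatedHalfLog_norm_sq {n : ℕ∞} :
    ContDiff ℝ n (fun x : ℂ => truncatedHalfLog (‖x‖ ^ 2)) :=
  contDiff_truncatedHalfLog.comp (contDiff_norm_sq ℝ)

lemma contDiff_logKernel (t : ℝ) : ContDiff ℝ (⊤ : ℕ∞) (logKernel t) :=
  (contDiff_truncatedHalfLog_norm_sq.comp (contDiff_const_smul t⁻¹)).add contDiff_const

variable {t : ℝ}

lemma isLogRegularization_logKernel (ht : 0 < t) : IsLogRegularization (logKernel t) t where
  continuous := (contDiff_logKernel t).continuous
  eq_log_norm x hx := by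
    have hx0 : 0 < ‖x‖ := ht.trans_le hx
    have hscaled : ‖t⁻¹ • x‖ = ‖x‖ / t := by
      rw [norm_smul, norm_inv, Real.norm_of_nonneg ht.le, inv_mul_eq_div]
    have hone : 1 ≤ (‖x‖ / t) ^ 2 := one_le_pow₀ ((one_le_div ht).mpr hx)
    rw [logKernel, hscaled, truncatedHalfLog_eq (by linarith), Real.log_pow,
      Real.log_div hx0.ne' ht.ne']
    push_cast
    ring
  abs_sub_log_norm_le x hx hxt := by
    have hx0 : 0 < ‖x‖ := norm_pos_iff.mpr hx
    have hlog : 0 ≤ Real.log (t / ‖x‖) := Real.log_nonneg ((one_le_div hx0).mpr hxt.le)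
    have hscaled : ‖t⁻¹ • x‖ = (t / ‖x‖)⁻¹ := by
      rw [norm_smul, norm_inv, Real.norm_of_nonneg ht.le, inv_div, inv_mul_eq_div]
    set c := Real.smoothTransition (4 * ‖t⁻¹ • x‖ ^ 2 - 1) with hc
    have hinterp : logKernel t x - Real.log ‖x‖ = (1 - c) * Real.log (t / ‖x‖) := by
      rw [logKernel, truncatedHalfLog, ← hc, hscaled, Real.log_pow, Real.log_inv,
        Real.log_div ht.ne' hx0.ne']
      push_cast
      ring
    have hc0 : 0 ≤ c := Real.smoothTransition.nonneg _
    have hc1 : c ≤ 1 := Real.smoothTransition.le_one _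
    rw [hinterp, abs_of_nonneg (mul_nonneg (by linarith) hlog)]
    exact mul_le_of_le_one_left hlog (by linarith)

lemma lap_logKernel (t : ℝ) (x : ℂ) :
    lap (logKernel t) x
      = t⁻¹ ^ 2 * lap (fun x => truncatedHalfLog (‖x‖ ^ 2)) (t⁻¹ • x) := by
  have h := lap_comp_smul_sub (contDiff_truncatedHalfLog_norm_sq (n := 2)) t⁻¹ 0 x
  simp only [sub_zero] at h
  exact (congrFun (lap_add_const _ _) x).trans h

lemma contDiff_lap_logKernel (t : ℝ) : ContDiff ℝ (⊤ : ℕ∞) (lap (logKernel t)) :=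
  contDiff_lap (contDiff_logKernel t) le_rfl

lemma lap_logKernel_eq_zero (ht : 0 < t) {x : ℂ} (hx : t ≤ ‖x‖) : lap (logKernel t) x = 0 := by
  have hone : (1 : ℝ) ≤ ‖t⁻¹ • x‖ := by
    rwa [norm_smul, norm_inv, Real.norm_of_nonneg ht.le, inv_mul_eq_div, one_le_div ht]
  have heq : (fun x : ℂ => truncatedHalfLog (‖x‖ ^ 2)) =ᶠ[𝓝 (t⁻¹ • x)] fun x => Real.log ‖x‖ := by
    have hcont : ContinuousAt (fun x : ℂ => ‖x‖ ^ 2) (t⁻¹ • x) := by fun_prop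
    filter_upwards [hcont.eventually (eventually_gt_nhds (b := 1 / 2) (by nlinarith))] with y hy
    rw [truncatedHalfLog_eq hy.le, Real.log_pow]
    push_cast
    ring
  have hharm : InnerProductSpace.HarmonicAt (fun y : ℂ => Real.log ‖y‖) (t⁻¹ • x) :=
    analyticAt_id.harmonicAt_log_norm (norm_pos_iff.mp (one_pos.trans_le hone))
  rw [lap_logKernel, lap_congr_nhds heq, lap_eq_zero_of_harmonicAt hharm, mul_zero]

lemma hasCompactSupport_lap_logKernel (ht : 0 < t) : HasCompactSupport (lap (logKernel t)) :=
  .intro (isCompact_closedBall (0 : ℂ) t) fun x hx =>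
    lap_logKernel_eq_zero ht (by simpa using (not_le.mp (mt mem_closedBall_zero_iff.mpr hx)).le)

lemma integral_lap_logKernel (ht : 0 < t) : ∫ x, lap (logKernel t) x = 2 * π := by
  have hderiv (s : ℝ) (hs : 1 ≤ s) : s * deriv truncatedHalfLog s = 1 / 2 := by
    rw [deriv_truncatedHalfLog (by linarith)]
    field_simp
  simp_rw [lap_logKernel]
  rw [integral_const_mul, Measure.integral_comp_smul,
    integral_lap_comp_norm_sq (contDiff_truncatedHalfLog (n := 2)) hderiv]
  simp only [inv_pow, Complex.finrank_real_complex, inv_inv, abs_pow, sq_abs, one_div, smul_eq_mul]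
  field_simp
  norm_num

lemma integral_abs_lap_logKernel (ht : 0 < t) :
    ∫ x, |lap (logKernel t) x| = ∫ x, |lap (fun x => truncatedHalfLog (‖x‖ ^ 2)) x| := by
  simp_rw [lap_logKernel, abs_mul]
  rw [integral_const_mul,
    Measure.integral_comp_smul volume fun x => |lap (fun x => truncatedHalfLog (‖x‖ ^ 2)) x|]
  simp only [inv_pow, abs_inv, abs_pow, sq_abs, Complex.finrank_real_complex, inv_inv, smul_eq_mul]
  field_simp

end SmoothedLogKernel

end Laplacian

section RieszDecomposition

open scoped Convolution

variable {φ : ℂ → ℝ} {μ ν : Measure ℂ} {K δ γ R t : ℝ}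

/-- `Δφ = μ` in the sense of distributions. -/
def HasDistribLaplacian (φ : ℂ → ℝ) (μ : Measure ℂ) : Prop :=
  ∀ v : ℂ → ℝ, ContDiff ℝ (⊤ : ℕ∞) v → HasCompactSupport v → ∫ z, φ z * lap v z = ∫ z, v z ∂μ

lemma HasDistribLaplacian.lap_convolution (h : HasDistribLaplacian φ μ)
    (hφ : LocallyIntegrable φ) {θ : ℂ → ℝ} (hθ : ContDiff ℝ (⊤ : ℕ∞) θ)
    (hθc : HasCompactSupport θ) (z : ℂ) :
    lap (φ ⋆[ContinuousLinearMap.mul ℝ ℝ] θ) z = ∫ w, θ (z - w) ∂μ := by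
  have hθ2 : ContDiff ℝ 2 θ := hθ.of_le (by norm_cast)
  rw [_root_.lap_convolution hφ hθ2 hθc, convolution_mul]
  simp_rw [← lap_comp_sub_left hθ2]
  exact h _ (hθ.comp (contDiff_const.sub contDiff_id)) (hθc.comp_homeomorph (Homeomorph.subLeft z))

section Mollification

lemma abs_two_pi_mul_sub_convolution_le (hφ : LocallyIntegrable φ) (ht : 0 < t) {z : ℂ} {d : ℝ}
    (hd : ∀ w, ‖z - w‖ < t → |φ z - φ w| ≤ d) :
    |2 * π * φ z - (φ ⋆[ContinuousLinearMap.mul ℝ ℝ] lap (logKernel t)) z|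
      ≤ d * ∫ x, |lap (logKernel t) x| := by
  set θ := lap (logKernel t)
  have hcont : Continuous θ := (contDiff_lap_logKernel t).continuous
  have hcomp : HasCompactSupport θ := hasCompactSupport_lap_logKernel ht
  have hint : Integrable (fun w => θ (z - w)) :=
    (hcont.integrable_of_hasCompactSupport hcomp).comp_sub_left z
  have hmean : 2 * π * φ z = ∫ w, φ z * θ (z - w) := by
    rw [integral_const_mul, integral_sub_left_eq_self θ volume z, integral_lap_logKernel ht]
    ring
  have hbound (w : ℂ) : ‖φ z * θ (z - w) - φ w * θ (z - w)‖ ≤ d * |θ (z - w)| := by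
    rw [← sub_mul, norm_mul, Real.norm_eq_abs, Real.norm_eq_abs]
    rcases lt_or_ge ‖z - w‖ t with hw | hw
    · gcongr
      exact hd w hw
    · rw [show θ (z - w) = 0 from lap_logKernel_eq_zero ht hw, abs_zero, mul_zero, mul_zero]
  have hconv : Integrable (fun w => φ w * θ (z - w)) :=
    hcomp.convolutionExists_right (.mul ℝ ℝ) hφ hcont z
  rw [hmean, convolution_mul, ← integral_sub (hint.const_mul _) hconv, ← Real.norm_eq_abs]
  refine (norm_integral_le_of_norm_le (hint.abs.const_mul _) (.of_forall hbound)).trans_eq ?_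
  rw [integral_const_mul, integral_sub_left_eq_self (fun w => |θ w|) volume z]

lemma eventually_abs_two_pi_mul_sub_convolution_lt (hφ : Continuous φ) (S : ℝ) {e : ℝ}
    (he : 0 < e) : ∀ᶠ t in 𝓝[>] (0 : ℝ), ∀ z, ‖z‖ ≤ S →
      |2 * π * φ z - (φ ⋆[ContinuousLinearMap.mul ℝ ℝ] lap (logKernel t)) z| < e := by
  set I : ℝ := ∫ x, |lap (fun x => truncatedHalfLog (‖x‖ ^ 2)) x| with hI
  have hI1 : 0 < I + 1 := add_pos_of_nonneg_of_pos (integral_nonneg fun _ => abs_nonneg _) one_pos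
  obtain ⟨s, hs, hφs⟩ := Metric.uniformContinuousOn_iff.mp
    ((isCompact_closedBall (0 : ℂ) (S + 1)).uniformContinuousOn_of_continuous hφ.continuousOn)
    (e / (I + 1)) (div_pos he hI1)
  filter_upwards [Ioo_mem_nhdsGT (lt_min hs one_pos)] with t ht z hz
  obtain ⟨hts, ht1⟩ := lt_min_iff.mp ht.2
  refine (abs_two_pi_mul_sub_convolution_le hφ.locallyIntegrable ht.1 (d := e / (I + 1))
    fun w hw => ?_).trans_lt ?_
  · have hwS : ‖w‖ ≤ S + 1 := by linarith [norm_le_norm_add_norm_sub z w]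
    exact (hφs z (by simpa using by linarith) w (by simpa using hwS)
      (by rw [dist_eq_norm]; linarith)).le
  · rw [integral_abs_lap_logKernel ht.1, ← hI, div_mul_eq_mul_div, div_lt_iff₀ hI1]
    gcongr
    linarith

end Mollification

section SmoothPotential

variable {k : ℂ → ℝ}

lemma exists_contDiff_hasCompactSupport_eqOn_ball (hk : ContDiff ℝ (⊤ : ℕ∞) k) (S : ℝ) :
    ∃ κ : ℂ → ℝ, ContDiff ℝ (⊤ : ℕ∞) κ ∧ HasCompactSupport κ ∧ EqOn κ k (ball 0 S) := by
  let χ : ContDiffBump (0 : ℂ) := ⟨|S| + 1, |S| + 2, by positivity, by linarith⟩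
  refine ⟨fun x => χ x * k x, χ.contDiff.mul hk, χ.hasCompactSupport.mul_right, fun x hx => ?_⟩
  have hχ : χ x = 1 := χ.one_of_mem_closedBall (by
    rw [mem_closedBall_zero_iff]
    linarith [mem_ball_zero_iff.mp hx, le_abs_self S])
  simp [hχ]

lemma exists_contDiff_integral_comp_sub_eventuallyEq (hk : ContDiff ℝ (⊤ : ℕ∞) k)
    [IsFiniteMeasure ν] (hν : ∀ᵐ w ∂ν, w ∈ ball 0 R) (z : ℂ) :
    ∃ U : ℂ → ℝ, ContDiff ℝ (⊤ : ℕ∞) U ∧ (fun y => ∫ w, k (y - w) ∂ν) =ᶠ[𝓝 z] U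
      ∧ lap U z = ∫ w, lap k (z - w) ∂ν := by
  obtain ⟨κ, hκ, hκc, heq⟩ := exists_contDiff_hasCompactSupport_eqOn_ball hk (‖z‖ + 1 + R)
  have hone : LocallyIntegrable (fun _ : ℂ => (1 : ℝ)) ν := (integrable_const 1).locallyIntegrable
  have hmem (y : ℂ) (hy : ‖y‖ < ‖z‖ + 1) : ∀ᵐ w ∂ν, y - w ∈ ball (0 : ℂ) (‖z‖ + 1 + R) := by
    filter_upwards [hν] with w hw
    rw [mem_ball_zero_iff] at hw ⊢
    linarith [norm_sub_le y w]
  refine ⟨(fun _ => 1) ⋆[ContinuousLinearMap.mul ℝ ℝ, ν] κ,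
    hκc.contDiff_convolution_right _ hone hκ, ?_, ?_⟩
  · filter_upwards [continuous_norm.continuousAt.eventually_lt_const (lt_add_one ‖z‖)] with y hy
    refine integral_congr_ae ?_
    filter_upwards [hmem y hy] with w hw
    simp [heq hw]
  · rw [lap_convolution hone (hκ.of_le (by norm_cast)) hκc, convolution_mul]
    refine integral_congr_ae ?_
    filter_upwards [hmem z (lt_add_one _)] with w hw
    rw [one_mul, lap_congr_nhds (heq.eventuallyEq_of_mem (isOpen_ball.mem_nhds hw))]

end SmoothPotential

lemma HasDistribLaplacian.harmonicOnNhd_convolution_sub (h : HasDistribLaplacian φ μ)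
    (hφ : LocallyIntegrable φ) (hμ : μ (ball 0 R) ≠ ∞) (ht : 0 < t) (ht1 : t ≤ 1) :
    InnerProductSpace.HarmonicOnNhd
      (fun z => (φ ⋆[ContinuousLinearMap.mul ℝ ℝ] lap (logKernel t)) z
        - ∫ w in ball 0 R, logKernel t (z - w) ∂μ) (ball 0 (R - 1)) := by
  set Φ := φ ⋆[ContinuousLinearMap.mul ℝ ℝ] lap (logKernel t)
  have hΦ : ContDiff ℝ 2 Φ :=
    ((hasCompactSupport_lap_logKernel ht).contDiff_convolution_right _ hφ
      (contDiff_lap_logKernel t)).of_le (by norm_cast)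
  have : IsFiniteMeasure (μ.restrict (ball 0 R)) := isFiniteMeasure_restrict.mpr hμ
  have hU := exists_contDiff_integral_comp_sub_eventuallyEq (R := R) (contDiff_logKernel t)
    (ae_restrict_mem (μ := μ) measurableSet_ball)
  intro z hz
  refine ⟨?_, ?_⟩
  · obtain ⟨U, hUc, heq, -⟩ := hU z
    exact hΦ.contDiffAt.sub ((hUc.of_le (by norm_cast)).contDiffAt.congr_of_eventuallyEq heq)
  · filter_upwards [isOpen_ball.mem_nhds hz] with y hy
    obtain ⟨U, hUc, heq, hlap⟩ := hU y
    have hsupp : ∫ w in ball 0 R, lap (logKernel t) (y - w) ∂μ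
        = ∫ w, lap (logKernel t) (y - w) ∂μ := by
      refine setIntegral_eq_integral_of_forall_compl_eq_zero fun w hw =>
        lap_logKernel_eq_zero ht ?_
      rw [mem_ball_zero_iff] at hw hy
      linarith [norm_le_norm_add_norm_sub y w]
    refine (InnerProductSpace.laplacian_congr_nhds
      ((EventuallyEq.refl _ Φ).sub heq)).eq_of_nhds.trans ?_
    rw [hΦ.contDiffAt.laplacian_sub (hUc.of_le (by norm_cast)).contDiffAt, ← lap_eq_laplacian,
      ← lap_eq_laplacian, hlap, hsupp,
      h.lap_convolution hφ (contDiff_lap_logKernel t) (hasCompactSupport_lap_logKernel ht),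
      sub_self]
    rfl

lemma HasDistribLaplacian.exists_abs_sub_logPotential_sub_re_le (h : HasDistribLaplacian φ μ)
    (hφ : Continuous φ) (hν : AdmissibleCharge (μ.restrict (ball 0 R)) K δ γ R) :
    ∃ f : ℂ → ℂ, DifferentiableOn ℂ f (ball 0 (R - 1)) ∧ ∀ z ∈ ball (0 : ℂ) (R - 1),
      |φ z - (2 * π)⁻¹ * logPotential (μ.restrict (ball 0 R)) z - (f z).re| ≤ 1 := by
  set ν := μ.restrict (ball 0 R)
  have hμ : μ (ball 0 R) ≠ ∞ := isFiniteMeasure_restrict.mp hν.isFiniteMeasure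
  have hsmall : ∀ᶠ t in 𝓝[>] (0 : ℝ), t ∈ Ioo 0 1 := Ioo_mem_nhdsGT one_pos
  obtain ⟨t, ⟨ht, ht1⟩, hconv, hpot⟩ := (hsmall.and
    ((eventually_abs_two_pi_mul_sub_convolution_lt hφ R one_pos).and
      (hν.eventually_forall_isLogRegularization R one_pos))).exists
  obtain ⟨f, hf, hfre⟩ := ((h.harmonicOnNhd_convolution_sub hφ.locallyIntegrable hμ ht
    ht1.le).const_smul (c := (2 * π)⁻¹)).exists_analyticOnNhd_ball_re_eq
  refine ⟨f, hf.differentiableOn, fun z hz => ?_⟩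
  have hzR : ‖z‖ ≤ R := by linarith [mem_ball_zero_iff.mp hz]
  rw [show (f z).re = _ from hfre hz, Pi.smul_apply, smul_eq_mul]
  set Φ := (φ ⋆[ContinuousLinearMap.mul ℝ ℝ] lap (logKernel t)) z
  set U := ∫ w, logKernel t (z - w) ∂ν
  calc |φ z - (2 * π)⁻¹ * logPotential ν z - (2 * π)⁻¹ * (Φ - U)|
      = (2 * π)⁻¹ * |(2 * π * φ z - Φ) + (U - logPotential ν z)| := by
        rw [← abs_of_pos (inv_pos.mpr Real.two_pi_pos), ← abs_mul,
          abs_of_pos (inv_pos.mpr Real.two_pi_pos)]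
        congr 1
        field_simp
        ring
    _ ≤ (2 * π)⁻¹ * (1 + 1) := by
        gcongr
        exact (abs_add_le _ _).trans (add_le_add (hconv z hzR).le
          (hpot _ (isLogRegularization_logKernel ht) z hzR).le)
    _ ≤ 1 := by
        rw [inv_mul_le_one₀ Real.two_pi_pos]
        linarith [Real.pi_gt_three]

end RieszDecomposition

section NormalFamilies

lemma tendstoLocallyUniformlyOn_of_eventually_lipschitzOnWith {ι X Y : Type*}
    [PseudoMetricSpace X] [PseudoMetricSpace Y] {l : Filter ι} [l.NeBot] {F : ι → X → Y}
    {f : X → Y} {s : Set X} {K : ℝ≥0} (hF : ∀ᶠ n in l, LipschitzOnWith K (F n) s)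
    (hf : ∀ x ∈ s, Tendsto (F · x) l (𝓝 (f x))) : TendstoLocallyUniformlyOn F f l s := by
  have hlip : LipschitzOnWith K f s := .of_dist_le_mul fun x hx y hy =>
    le_of_tendsto ((hf x hx).dist (hf y hy)) (hF.mono fun n hn => hn.dist_le_mul x hx y hy)
  rw [Metric.tendstoLocallyUniformlyOn_iff]
  intro ε hε x hx
  refine ⟨ball x (ε / (4 * (K + 1))) ∩ s, inter_mem
    (mem_nhdsWithin_of_mem_nhds (ball_mem_nhds _ (by positivity))) self_mem_nhdsWithin, ?_⟩
  filter_upwards [Metric.tendsto_nhds.mp (hf x hx) (ε / 2) (by positivity), hF] with n hn hFn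
  rintro y ⟨hyx, hy⟩
  have hsmall : K * dist y x ≤ ε / 4 :=
    calc K * dist y x ≤ (K + 1) * (ε / (4 * (K + 1))) := by
          gcongr
          exacts [(lt_add_one _).le, (mem_ball.mp hyx).le]
      _ = ε / 4 := by field_simp
  have hfy := hlip.dist_le_mul y hy x hx
  have hFy := hFn.dist_le_mul x hx y hy
  rw [dist_comm x y] at hFy
  rw [dist_comm] at hn
  linarith [dist_triangle4 (f y) (f x) (F n x) (F n y)]

variable {E : Type*} [NormedAddCommGroup E] [NormedSpace ℂ E]

lemma lipschitzOnWith_ball_of_forall_norm_le {f : ℂ → E} {c : ℂ} {r R S : ℝ}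
    (hf : DifferentiableOn ℂ f (ball c R)) (hrR : r < R) (hS : ∀ z ∈ ball c R, ‖f z‖ ≤ S) :
    LipschitzOnWith (S / (R - r)).toNNReal f (ball c r) := by
  refine (convex_ball c r).lipschitzOnWith_of_nnnorm_deriv_le (fun z hz => ?_) fun z hz => ?_
  · exact hf.differentiableAt (isOpen_ball.mem_nhds (ball_subset_ball hrR.le hz))
  have hsub : closedBall z (R - r) ⊆ ball c R := by
    refine closedBall_subset_ball' ?_
    linarith [mem_ball.mp hz]
  refine NNReal.le_toNNReal_of_coe_le
    (Complex.norm_deriv_le_of_forall_mem_sphere_norm_le (sub_pos.mpr hrR) ?_ fun w hw =>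
      hS w (hsub (sphere_subset_closedBall hw)))
  exact (hf.mono hsub).diffContOnCl_ball subset_rfl

lemma exists_differentiable_forall_tendsto_hyperfilter [ProperSpace E] {B : ℂ → ℝ}
    (hB : Continuous B) {F : ℕ → ℂ → E} (hF : ∀ n : ℕ, DifferentiableOn ℂ (F n) (ball 0 n))
    (hFB : ∀ n : ℕ, ∀ z ∈ ball (0 : ℂ) n, ‖F n z‖ ≤ B z) :
    ∃ P : ℂ → E, Differentiable ℂ P ∧ (∀ z, ‖P z‖ ≤ B z) ∧
      ∀ z, Tendsto (F · z) (hyperfilter ℕ) (𝓝 (P z)) := by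
  have hlarge (r : ℝ) : ∀ᶠ n : ℕ in hyperfilter ℕ, r < n :=
    (tendsto_natCast_atTop_atTop.eventually_gt_atTop r).filter_mono Nat.hyperfilter_le_atTop
  have hlim (z : ℂ) :
      ∃ p ∈ closedBall (0 : E) (B z), Tendsto (F · z) (hyperfilter ℕ) (𝓝 p) := by
    exact (isCompact_closedBall 0 (B z)).ultrafilter_le_nhds ((hyperfilter ℕ).map (F · z))
      (tendsto_principal.mpr ((hlarge ‖z‖).mono fun n hn =>
        mem_closedBall_zero_iff.mpr (hFB n z (mem_ball_zero_iff.mpr hn))))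
  choose P hPB hP using hlim
  refine ⟨P, fun z => ?_, fun z => mem_closedBall_zero_iff.mp (hPB z), hP⟩
  set r := ‖z‖ + 1
  obtain ⟨S, hS⟩ :=
    (isCompact_closedBall (0 : ℂ) (r + 1)).exists_bound_of_continuousOn hB.continuousOn
  have hlip : ∀ᶠ n : ℕ in hyperfilter ℕ,
      LipschitzOnWith (S / (r + 1 - r)).toNNReal (F n) (ball 0 r) := by
    filter_upwards [hlarge (r + 1)] with n hn
    have hsub : ball (0 : ℂ) (r + 1) ⊆ ball 0 n := ball_subset_ball hn.le
    exact lipschitzOnWith_ball_of_forall_norm_le ((hF n).mono hsub) (lt_add_one r) fun w hw =>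
      (hFB n w (hsub hw)).trans ((le_abs_self _).trans (hS w (ball_subset_closedBall hw)))
  have hdiff : DifferentiableOn ℂ P (ball 0 r) :=
    (tendstoLocallyUniformlyOn_of_eventually_lipschitzOnWith hlip fun w _ => hP w).differentiableOn
      ((hlarge r).mono fun n hn => (hF n).mono (ball_subset_ball hn.le)) isOpen_ball
  exact hdiff.differentiableAt (isOpen_ball.mem_nhds (by simp [r]))

end NormalFamilies

section PeakFunctions

variable {φ : ℂ → ℝ} {μ : Measure ℂ} {D : ℝ≥0} {ε : ℝ}

lemma exp_mul_norm_cexp_le {a b p q : ℝ} {u v : ℂ} (hε : 0 ≤ ε) (hu : |a - p - u.re| ≤ 1)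
    (hv : |b - q - v.re| ≤ 1) :
    Real.exp (ε * (p - q)) * ‖Complex.exp (ε * (u - v))‖
      ≤ Real.exp (2 * ε) * Real.exp (ε * (a - b)) := by
  rw [Complex.norm_exp, Complex.re_ofReal_mul, Complex.sub_re, ← Real.exp_add, ← Real.exp_add]
  have hsum : p - q + (u.re - v.re) ≤ 2 + (a - b) := by
    linarith [(abs_le.mp hu).1, (abs_le.mp hv).2]
  exact Real.exp_le_exp.mpr (by linarith [mul_le_mul_of_nonneg_left hsum hε])

lemma exists_forall_isDoubling_peak_on_ball (hD : 1 ≤ D) (hε : 0 < ε) (M : ℝ) :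
    ∃ C : ℝ, 0 < C ∧ ∀ (φ : ℂ → ℝ) (μ : Measure ℂ), Continuous φ → HasDistribLaplacian φ μ →
      IsDoubling μ D → μ (ball 0 1) = 1 → ∀ r, ∃ P : ℂ → ℂ, DifferentiableOn ℂ P (ball 0 r) ∧
        P 0 = 1 ∧ ∀ z ∈ ball (0 : ℂ) r,
          ‖P z‖ ≤ C * (1 + ‖z‖) ^ (-M) * Real.exp (ε * (φ z - φ 0)) := by
  obtain ⟨C, R₀, hC, hR₀, hpeak⟩ :=
    exists_forall_isDoubling_peak_logPotential hD (by positivity : 0 < ε * (2 * π)⁻¹) M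
  obtain ⟨K, δ, γ, hK, hδ, hγ, hriesz⟩ := exists_forall_isDoubling_rieszBounded hD
  refine ⟨C * Real.exp (2 * ε), by positivity, fun φ μ hφ hlap hμ h1 r => ?_⟩
  set R := max R₀ (|r| + 2)
  have hR : R₀ ≤ R := le_max_left _ _
  have hrR : |r| + 2 ≤ R := le_max_right _ _
  obtain ⟨Q, hQ, hQ0, hQle⟩ := hpeak μ hμ h1 R hR
  set ψ := logPotential (μ.restrict (ball 0 R))
  have hfin : μ (ball 0 R) ≠ ∞ :=
    hμ.measure_ball_ne_top one_pos (h1.trans_ne ENNReal.one_ne_top) R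
  have hcharge : AdmissibleCharge (μ.restrict (ball 0 R)) K δ γ R := by
    simpa using AdmissibleCharge.of_rieszBounded (hriesz μ hμ h1) hfin hK.le hδ hγ
      (hR₀.trans hR) zero_le_one
  obtain ⟨f, hf, hfle⟩ := hlap.exists_abs_sub_logPotential_sub_re_le hφ hcharge
  have hsub : ball (0 : ℂ) r ⊆ ball 0 (R - 1) :=
    ball_subset_ball (by linarith [le_abs_self r])
  have hzero : (0 : ℂ) ∈ ball (0 : ℂ) (R - 1) := mem_ball_self (by linarith [abs_nonneg r])
  refine ⟨fun z => Q z * Complex.exp (ε * (f z - f 0)), ?_, by simp [hQ0], fun z hz => ?_⟩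
  · exact hQ.differentiableOn.mul (((hf.mono hsub).sub_const _).const_mul _).cexp
  calc ‖Q z * Complex.exp (ε * (f z - f 0))‖
      ≤ C * (1 + ‖z‖) ^ (-M) * Real.exp (ε * (2 * π)⁻¹ * (ψ z - ψ 0))
          * ‖Complex.exp (ε * (f z - f 0))‖ := by
        rw [norm_mul]
        gcongr
        exact hQle z
    _ = C * (1 + ‖z‖) ^ (-M) * (Real.exp (ε * ((2 * π)⁻¹ * ψ z - (2 * π)⁻¹ * ψ 0))
          * ‖Complex.exp (ε * (f z - f 0))‖) := by ring_nf
    _ ≤ C * (1 + ‖z‖) ^ (-M) * (Real.exp (2 * ε) * Real.exp (ε * (φ z - φ 0))) := by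
        gcongr C * (1 + ‖z‖) ^ (-M) * ?_
        exact exp_mul_norm_cexp_le hε.le (hfle z (hsub hz)) (hfle 0 hzero)
    _ = C * Real.exp (2 * ε) * (1 + ‖z‖) ^ (-M) * Real.exp (ε * (φ z - φ 0)) := by ring

lemma exists_forall_isDoubling_peak_zero (hD : 1 ≤ D) (hε : 0 < ε) (M : ℝ) :
    ∃ C : ℝ, 0 < C ∧ ∀ (φ : ℂ → ℝ) (μ : Measure ℂ), Continuous φ → HasDistribLaplacian φ μ →
      IsDoubling μ D → μ (ball 0 1) = 1 → ∃ P : ℂ → ℂ, Differentiable ℂ P ∧ P 0 = 1 ∧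
        ∀ z, ‖P z‖ ≤ C * (1 + ‖z‖) ^ (-M) * Real.exp (ε * (φ z - φ 0)) := by
  obtain ⟨C, hC, hpeak⟩ := exists_forall_isDoubling_peak_on_ball hD hε M
  refine ⟨C, hC, fun φ μ hφ hlap hμ h1 => ?_⟩
  choose F hF hF0 hFle using fun n : ℕ => hpeak φ μ hφ hlap hμ h1 n
  have hB : Continuous fun z : ℂ => C * (1 + ‖z‖) ^ (-M) * Real.exp (ε * (φ z - φ 0)) := by
    refine (continuous_const.mul (Continuous.rpow_const (by fun_prop) fun z => Or.inl ?_)).mul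
      (by fun_prop)
    positivity
  obtain ⟨P, hP, hPle, hlim⟩ := exists_differentiable_forall_tendsto_hyperfilter hB hF hFle
  refine ⟨P, hP, tendsto_nhds_unique (hlim 0) ?_, hPle⟩
  simp [hF0]

/-- The image of `μ` under `w ↦ r⁻¹ • (w - η)`, which moves the disk `ball η r` to the unit disk. -/
def rescaledMeasure (μ : Measure ℂ) (η : ℂ) (r : ℝ) : Measure ℂ :=
  μ.map fun w => r⁻¹ • (w - η)

lemma rescaledMeasure_ball (μ : Measure ℂ) (η : ℂ) {r : ℝ} (hr : 0 < r) (z : ℂ) (s : ℝ) :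
    rescaledMeasure μ η r (ball z s) = μ (ball (η + r • z) (r * s)) := by
  rw [rescaledMeasure, Measure.map_apply (by fun_prop) measurableSet_ball]
  congr 1
  ext w
  have hdist : r⁻¹ • (w - η) - z = r⁻¹ • (w - (η + r • z)) := by
    rw [← sub_sub, smul_sub r⁻¹ (w - η), inv_smul_smul₀ hr.ne']
  rw [mem_preimage, mem_ball_iff_norm, mem_ball_iff_norm, hdist, norm_smul, norm_inv,
    Real.norm_of_nonneg hr.le, inv_mul_lt_iff₀ hr]

lemma IsDoubling.rescaledMeasure (h : IsDoubling μ D) (η : ℂ) {r : ℝ} (hr : 0 < r) :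
    IsDoubling (rescaledMeasure μ η r) D := by
  intro z s hs
  rw [rescaledMeasure_ball μ η hr, rescaledMeasure_ball μ η hr, mul_left_comm]
  exact h (η + r • z) (r * s) (by positivity)

lemma HasDistribLaplacian.rescaledMeasure (h : HasDistribLaplacian φ μ) (η : ℂ) {r : ℝ}
    (hr : 0 < r) :
    HasDistribLaplacian (fun z => φ (η + r • z)) (rescaledMeasure μ η r) := by
  intro v hv hvc
  set g : ℂ → ℝ := fun z => φ (η + r • z) * lap v z
  set T : ℂ ≃ₜ ℂ :=
    (Homeomorph.subRight η).trans (Homeomorph.smulOfNeZero r⁻¹ (inv_ne_zero hr.ne'))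
  have hg (w : ℂ) :
      φ w * lap (fun w => v (r⁻¹ • (w - η))) w = r⁻¹ ^ 2 * g (r⁻¹ • (w - η)) := by
    simp only [g, smul_inv_smul₀ hr.ne', add_sub_cancel,
      lap_comp_smul_sub (hv.of_le (by norm_cast))]
    ring
  calc ∫ z, g z
      = r⁻¹ ^ 2 * ∫ w, g (r⁻¹ • (w - η)) := by
        rw [integral_sub_right_eq_self (fun w => g (r⁻¹ • w)), Measure.integral_comp_smul,
          Complex.finrank_real_complex, inv_pow, inv_inv, abs_of_pos (by positivity),
          smul_eq_mul, inv_mul_cancel_left₀ (by positivity)]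
    _ = ∫ w, φ w * lap (fun w => v (r⁻¹ • (w - η))) w := by
        simp_rw [hg, integral_const_mul]
    _ = ∫ w, v (r⁻¹ • (w - η)) ∂μ := h _ (hv.comp (by fun_prop)) (hvc.comp_homeomorph T)
    _ = ∫ z, v z ∂_root_.rescaledMeasure μ η r := by
        rw [_root_.rescaledMeasure, integral_map (by fun_prop) hv.continuous.aestronglyMeasurable]

lemma IsRadius.rescaledMeasure_ball_one {ρ : ℂ → ℝ} (hρ : IsRadius μ ρ) (η : ℂ) :
    rescaledMeasure μ η (ρ η) (ball 0 1) = 1 := by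
  rw [rescaledMeasure_ball μ η (hρ η).1, smul_zero, add_zero, mul_one]
  exact (hρ η).2

lemma IsRadius.exists_peak {ρ : ℂ → ℝ} (hρ : IsRadius μ ρ) (hφ : Continuous φ)
    (hlap : HasDistribLaplacian φ μ) (hμ : IsDoubling μ D) (hD : 1 ≤ D) (hε : 0 < ε) (M : ℝ) :
    ∃ C : ℝ, 0 < C ∧ ∀ η, ∃ P : ℂ → ℂ, Differentiable ℂ P ∧ P η = 1 ∧ ∀ z, ‖P z‖ ≤
      C * (1 + ‖z - η‖ / ρ η) ^ (-M) * Real.exp (ε * (φ z - φ η)) := by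
  obtain ⟨C, hC, hpeak⟩ := exists_forall_isDoubling_peak_zero hD hε M
  refine ⟨C, hC, fun η => ?_⟩
  have hr := (hρ η).1
  obtain ⟨P, hP, hP0, hPle⟩ := hpeak (fun z => φ (η + ρ η • z)) _
    (hφ.comp (by fun_prop)) (hlap.rescaledMeasure η hr) (hμ.rescaledMeasure η hr)
    (hρ.rescaledMeasure_ball_one η)
  refine ⟨fun z => P (((ρ η)⁻¹ : ℝ) • (z - η)), hP.comp (by fun_prop), by simp [hP0],
    fun z => (hPle _).trans_eq ?_⟩
  rw [smul_inv_smul₀ hr.ne', add_sub_cancel, smul_zero, add_zero, norm_smul, norm_inv,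
    Real.norm_of_nonneg hr.le, inv_mul_eq_div]

end PeakFunctions

section PathDist

variable {ρ : ℂ → ℝ}

lemma integral_norm_deriv_div_nonneg (hρ : ∀ z, 0 ≤ ρ z) (γ : ℝ → ℂ) :
    0 ≤ ∫ t in (0 : ℝ)..1, ‖deriv γ t‖ / ρ (γ t) :=
  intervalIntegral.integral_nonneg zero_le_one fun _ _ => div_nonneg (norm_nonneg _) (hρ _)

lemma pathDist_nonneg (hρ : ∀ z, 0 ≤ ρ z) (z ζ : ℂ) : 0 ≤ pathDist ρ z ζ := by
  refine Real.sInf_nonneg ?_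
  rintro _ ⟨γ, _, _, _, rfl⟩
  exact integral_norm_deriv_div_nonneg hρ γ

lemma pathDist_le_integral (hρ : ∀ z, 0 ≤ ρ z) {γ : ℝ → ℂ} (hγ : ContDiff ℝ 1 γ) :
    pathDist ρ (γ 0) (γ 1) ≤ ∫ t in (0 : ℝ)..1, ‖deriv γ t‖ / ρ (γ t) := by
  refine csInf_le ⟨0, ?_⟩ ⟨γ, rfl, rfl, hγ, rfl⟩
  rintro _ ⟨γ', _, _, _, rfl⟩
  exact integral_norm_deriv_div_nonneg hρ γ'

lemma pathDist_le_norm_sub_mul (hρ : ∀ z, 0 ≤ ρ z) {z ζ : ℂ} {B : ℝ}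
    (hB : ∀ w, ‖w - ζ‖ ≤ ‖z - ζ‖ → (ρ w)⁻¹ ≤ B) : pathDist ρ z ζ ≤ ‖z - ζ‖ * B := by
  set γ : ℝ → ℂ := ⇑(AffineMap.lineMap z ζ : ℝ →ᵃ[ℝ] ℂ) with hγ
  have hderiv (t : ℝ) : deriv γ t = ζ - z := AffineMap.hasDerivAt_lineMap.deriv
  have hsmooth : ContDiff ℝ 1 γ := by
    have hline : γ = fun t : ℝ => t • (ζ - z) + z := rfl
    rw [hline]
    fun_prop
  have hspeed : ∀ t ∈ uIoc (0 : ℝ) 1, ‖‖deriv γ t‖ / ρ (γ t)‖ ≤ ‖z - ζ‖ * B := by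
    intro t ht
    rw [uIoc_of_le zero_le_one] at ht
    rw [Real.norm_of_nonneg (div_nonneg (norm_nonneg _) (hρ _)), hderiv, norm_sub_rev ζ z,
      div_eq_mul_inv]
    gcongr
    refine hB _ ?_
    rw [← dist_eq_norm, ← dist_eq_norm, hγ, dist_lineMap_right,
      Real.norm_of_nonneg (by linarith [ht.2])]
    exact mul_le_of_le_one_left dist_nonneg (by linarith [ht.1])
  calc pathDist ρ z ζ = pathDist ρ (γ 0) (γ 1) := by simp [hγ]
    _ ≤ ∫ t in (0 : ℝ)..1, ‖deriv γ t‖ / ρ (γ t) := pathDist_le_integral hρ hsmooth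
    _ ≤ ‖z - ζ‖ * B * |1 - 0| := (le_abs_self _).trans
        (intervalIntegral.norm_integral_le_of_norm_le_const hspeed)
    _ = ‖z - ζ‖ * B := by simp

lemma RieszBounded.inv_le_of_measure_ball_eq_one {E : Type*} [NormedAddCommGroup E]
    [MeasurableSpace E] [BorelSpace E] {ν : Measure E} {K δ γ s : ℝ} (h : RieszBounded ν K δ γ)
    (hK : 0 ≤ K) (hδ : 0 < δ) (hγ : 0 ≤ γ) (z : E) (hs : 0 < s) (hone : ν (ball z s) = 1) :
    s⁻¹ ≤ (1 + K ^ δ⁻¹) * (1 + ‖z‖) ^ (γ / δ) := by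
  have hz : 1 ≤ (1 + ‖z‖) ^ (γ / δ) :=
    Real.one_le_rpow (by linarith [norm_nonneg z]) (by positivity)
  have hKδ : 0 ≤ K ^ δ⁻¹ := by positivity
  rcases le_total s 1 with hs1 | hs1
  · have hmass : 1 ≤ K * (1 + ‖z‖) ^ γ * s ^ δ := by
      have hball := h.measure_ball_le hδ.le z hs hs1
      rwa [hone, ENNReal.one_le_ofReal] at hball
    calc s⁻¹ ≤ (K * (1 + ‖z‖) ^ γ) ^ δ⁻¹ := by
          rw [Real.le_rpow_inv_iff_of_pos (by positivity) (by positivity) hδ,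
            Real.inv_rpow hs.le, inv_le_iff_one_le_mul₀ (by positivity)]
          exact hmass
      _ = K ^ δ⁻¹ * (1 + ‖z‖) ^ (γ / δ) := by
          rw [Real.mul_rpow hK (by positivity), ← Real.rpow_mul (by positivity), div_eq_mul_inv]
      _ ≤ (1 + K ^ δ⁻¹) * (1 + ‖z‖) ^ (γ / δ) := by
          gcongr
          linarith
  · exact (inv_le_one_of_one_le₀ hs1).trans (one_le_mul_of_one_le_of_one_le (by linarith) hz)

variable {μ : Measure ℂ} {D : ℝ≥0}

lemma IsRadius.inv_le {K δ γ : ℝ} (hρ : IsRadius μ ρ) {η : ℂ}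
    (h : RieszBounded (rescaledMeasure μ η (ρ η)) K δ γ) (hK : 0 ≤ K) (hδ : 0 < δ) (hγ : 0 ≤ γ)
    (w : ℂ) :
    (ρ w)⁻¹ ≤ (1 + K ^ δ⁻¹) * (1 + ‖w - η‖ / ρ η) ^ (γ / δ) * (ρ η)⁻¹ := by
  have hη := (hρ η).1
  have hone : rescaledMeasure μ η (ρ η) (ball ((ρ η)⁻¹ • (w - η)) (ρ w / ρ η)) = 1 := by
    rw [rescaledMeasure_ball μ η hη, smul_inv_smul₀ hη.ne', add_sub_cancel,
      mul_div_cancel₀ _ hη.ne']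
    exact (hρ w).2
  have hle := h.inv_le_of_measure_ball_eq_one hK hδ hγ _ (div_pos (hρ w).1 hη) hone
  rwa [inv_div, div_eq_mul_inv, norm_smul, norm_inv, Real.norm_of_nonneg hη.le, inv_mul_eq_div,
    mul_comm, ← le_mul_inv_iff₀ hη] at hle

lemma IsRadius.exists_pathDist_le (hρ : IsRadius μ ρ) (hμ : IsDoubling μ D) (hD : 1 ≤ D) :
    ∃ A q : ℝ, 1 ≤ A ∧ 0 ≤ q ∧ ∀ z η, pathDist ρ z η ≤ A * (1 + ‖z - η‖ / ρ η) ^ q := by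
  obtain ⟨K, δ, γ, hK, hδ, hγ, hriesz⟩ := exists_forall_isDoubling_rieszBounded hD
  refine ⟨1 + K ^ δ⁻¹, γ / δ + 1, le_add_of_nonneg_right (by positivity), by positivity,
    fun z η => ?_⟩
  have hη := (hρ η).1
  have hν := hriesz _ (hμ.rescaledMeasure η hη) (hρ.rescaledMeasure_ball_one η)
  set x := ‖z - η‖ / ρ η with hx
  have : 0 ≤ x := by positivity
  have hinv : ∀ w, ‖w - η‖ ≤ ‖z - η‖ →
      (ρ w)⁻¹ ≤ (1 + K ^ δ⁻¹) * (1 + x) ^ (γ / δ) * (ρ η)⁻¹ := by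
    intro w hw
    refine (hρ.inv_le hν hK.le hδ hγ w).trans ?_
    rw [hx]
    gcongr
  calc pathDist ρ z η ≤ ‖z - η‖ * ((1 + K ^ δ⁻¹) * (1 + x) ^ (γ / δ) * (ρ η)⁻¹) :=
        pathDist_le_norm_sub_mul (fun w => (hρ w).1.le) hinv
    _ = (1 + K ^ δ⁻¹) * ((1 + x) ^ (γ / δ) * x) := by rw [hx]; ring
    _ ≤ (1 + K ^ δ⁻¹) * ((1 + x) ^ (γ / δ) * (1 + x)) := by
        gcongr
        exact le_add_of_nonneg_left zero_le_one
    _ = (1 + K ^ δ⁻¹) * (1 + x) ^ (γ / δ + 1) := by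
        rw [Real.rpow_add (by positivity), Real.rpow_one]

end PathDist

section FlatWeight

variable {ρ ω : ℂ → ℝ} {μ : Measure ℂ} {D : ℝ≥0}

lemma IsFlatWeight.exists_le_mul (hω : IsFlatWeight ρ ω) (hρ : ∀ z, 0 ≤ ρ z) :
    ∃ c : ℝ, ∀ z ζ X, 1 ≤ X → pathDist ρ z ζ ≤ X →
      ω z ≤ Real.exp c * X ^ c * ω ζ := by
  obtain ⟨hpos, -, c, hc, hflat⟩ := hω
  refine ⟨c, fun z ζ X hX hle => ?_⟩
  have hmax : max (Real.log (pathDist ρ z ζ)) 0 ≤ Real.log X := by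
    rw [max_comm, ← Real.posLog_eq_log (hX.trans (le_abs_self X))]
    exact Real.posLog_le_posLog (pathDist_nonneg hρ z ζ) hle
  calc ω z = Real.exp (Real.log (ω z)) := (Real.exp_log (hpos z)).symm
    _ ≤ Real.exp (c * (1 + Real.log X) + Real.log (ω ζ)) := by
        gcongr
        exact sub_le_iff_le_add.mp ((le_abs_self _).trans ((hflat z ζ).trans (by gcongr)))
    _ = Real.exp c * X ^ c * ω ζ := by
        rw [Real.exp_add, Real.exp_log (hpos ζ), mul_one_add, Real.exp_add, mul_comm c (Real.log X),
          ← Real.rpow_def_of_pos (by linarith)]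

lemma IsFlatWeight.exists_one_add_pathDist_pow_mul_le (hω : IsFlatWeight ρ ω)
    (hρ : IsRadius μ ρ) (hμ : IsDoubling μ D) (hD : 1 ≤ D) (m : ℕ) :
    ∃ C M : ℝ, 0 < C ∧ ∀ z η,
      (1 + pathDist ρ z η ^ m) * ω z ≤ C * (1 + ‖z - η‖ / ρ η) ^ M * ω η := by
  have hρ0 (z : ℂ) : 0 ≤ ρ z := (hρ z).1.le
  obtain ⟨A, q, hA, hq, hdist⟩ := hρ.exists_pathDist_le hμ hD
  obtain ⟨c, hflat⟩ := hω.exists_le_mul hρ0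
  refine ⟨2 * Real.exp c * A ^ (m + c), q * (m + c), by positivity, fun z η => ?_⟩
  have hωz := (hω.1 z).le
  have hx : 0 ≤ ‖z - η‖ / ρ η := div_nonneg (norm_nonneg _) (hρ0 η)
  set d := pathDist ρ z η
  have hd : 0 ≤ d := pathDist_nonneg hρ0 z η
  set x := ‖z - η‖ / ρ η
  set X := A * (1 + x) ^ q with hX
  have hX1 : 1 ≤ X := one_le_mul_of_one_le_of_one_le hA (Real.one_le_rpow (by linarith) hq)
  calc (1 + d ^ m) * ω z ≤ (X ^ m + X ^ m) * (Real.exp c * X ^ c * ω η) := by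
        gcongr
        exacts [one_le_pow₀ hX1, hdist z η, hflat z η X hX1 (hdist z η)]
    _ = 2 * Real.exp c * X ^ (m + c) * ω η := by
        rw [Real.rpow_add (by linarith), Real.rpow_natCast]
        ring
    _ = 2 * Real.exp c * A ^ (m + c) * (1 + x) ^ (q * (m + c)) * ω η := by
        rw [hX, Real.mul_rpow (by linarith) (by positivity), ← Real.rpow_mul (by positivity)]
        ring

end FlatWeight

lemma HasDoublingLaplacian.exists_one_le_isDoubling {φ : ℂ → ℝ} {μ : Measure ℂ}
    (h : HasDoublingLaplacian φ μ) : ∃ D : ℝ≥0, 1 ≤ D ∧ IsDoubling μ D := by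
  obtain ⟨D, -, hD⟩ := h.doubling
  refine ⟨max D 1, le_max_right _ _, fun z r hr => (hD z r hr).trans ?_⟩
  gcongr
  exact le_max_left _ _

/-- Peak functions: for any `ε > 0`, flat weight `ω` and `m ∈ ℕ` there is `C > 0`
such that for each `η ∈ ℂ` there is an entire `P_η` with `P_η(η) = 1` and
`|P_η(z)| ≤ C e^{ε(φ(z)-φ(η))} (ω(η)/ω(z)) / (1 + d_φ(z,η)^m)`. -/
theorem peak_functions
    (φ : ℂ → ℝ) (μ : Measure ℂ) (hφ : HasDoublingLaplacian φ μ)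
    (ρ : ℂ → ℝ) (hρ : IsRadius μ ρ)
    (ω : ℂ → ℝ) (hω : IsFlatWeight ρ ω)
    (ε : ℝ) (hε : 0 < ε) (m : ℕ) :
    ∃ C : ℝ, 0 < C ∧ ∀ η : ℂ, ∃ P : ℂ → ℂ, Differentiable ℂ P ∧ P η = 1 ∧
      ∀ z : ℂ, ‖P z‖ ≤
        C * Real.exp (ε * (φ z - φ η)) * (ω η / ω z) / (1 + pathDist ρ z η ^ m) := by
  obtain ⟨D, hD, hμ⟩ := hφ.exists_one_le_isDoubling
  obtain ⟨B, M, hB, hweight⟩ := hω.exists_one_add_pathDist_pow_mul_le hρ hμ hD m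
  obtain ⟨C, hC, hpeak⟩ := hρ.exists_peak hφ.continuous hφ.lap_eq hμ hD hε M
  refine ⟨C * B, by positivity, fun η => ?_⟩
  obtain ⟨P, hP, hPη, hPle⟩ := hpeak η
  refine ⟨P, hP, hPη, fun z => ?_⟩
  have hωz := hω.1 z
  have hd := pathDist_nonneg (fun w => (hρ w).1.le) z η
  have hx : 0 ≤ ‖z - η‖ / ρ η := div_nonneg (norm_nonneg _) (hρ η).1.le
  set x := ‖z - η‖ / ρ η
  rw [mul_div_assoc', div_div, le_div_iff₀ (by positivity), mul_comm (ω z)]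
  calc ‖P z‖ * ((1 + pathDist ρ z η ^ m) * ω z)
      ≤ C * (1 + x) ^ (-M) * Real.exp (ε * (φ z - φ η)) * (B * (1 + x) ^ M * ω η) := by
        exact mul_le_mul (hPle z) (hweight z η) (by positivity) (by positivity)
    _ = C * B * Real.exp (ε * (φ z - φ η)) * ω η := by
        rw [Real.rpow_neg (by positivity)]
        field_simp

end
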